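/- arXiv:2207.06575 — 2 statements merged into one kernel-verified Lean document; each statement's English description precedes it below -/
import Mathlib

section
/- Let F be a finite extension of ℚ₂ of degree m that contains a primitive fourth root of unity. Then the number |Ab(4)| of abelian extensions of F of degree 4 (inside a fixed algebraic closure of F) equals (32·2^{2m} − 12·2^m + 1)/3, i.e. 32·2^{2m}/3 − 4·2^m + 1/3. -/
/-!
Since `F` contains the `ℓ ^ 2`-th roots of unity, Kummer theory identifies the abelian extensions of
degree `ℓ ^ 2` with the subgroups of order `ℓ ^ 2` of `Fˣ / (Fˣ) ^ (ℓ ^ 2)`. The index of `(Fˣ) ^ n`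
in `Fˣ` is found by comparing `Fˣ` with a subgroup `A = ⟨ϖ⟩ × {u | ‖u - 1‖ ≤ ‖ϖ‖}` of finite index:
the quantity `[G : G ^ n] / #G[n]` is the same for `Fˣ` and for `A`, and on `A` the `n`-th power map
is injective with an explicit image, by Newton iteration. This gives `q` and `q ^ 2` for the numbers
of elements of `Fˣ / (Fˣ) ^ (ℓ ^ 2)` killed by `ℓ` and by `ℓ ^ 2`. The cyclic subgroups of order
`ℓ ^ 2` are counted by their generators, the others by their bases.
-/

/-! ### Subgroups of prime square order -/

section SubgroupCount

open Subgroup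
open scoped Nat

lemma natCard_eq_mul_of_existsUnique {α β : Type*} [Finite α] [Finite β] {r : β → α → Prop}
    {k : ℕ} (hr : ∀ a, ∃! b, r b a) (hk : ∀ b, Nat.card {a // r b a} = k) :
    Nat.card α = Nat.card β * k := by
  have := Fintype.ofFinite β
  have hbij : Function.Bijective fun x : Σ b, {a // r b a} => (x.2 : α) := by
    refine ⟨?_, fun a => ?_⟩
    · rintro ⟨b, a, ha⟩ ⟨c, _, hc⟩ rfl
      obtain rfl := (hr a).unique ha hc
      rfl
    · obtain ⟨b, hb, -⟩ := hr a
      exact ⟨⟨b, a, hb⟩, rfl⟩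
  rw [← Nat.card_eq_of_bijective _ hbij, Nat.card_sigma, Finset.sum_congr rfl fun b _ => hk b,
    Finset.sum_const, Finset.card_univ, smul_eq_mul, Nat.card_eq_fintype_card]

lemma natCard_and_add_natCard_and_not {α : Type*} [Finite α] (P Q : α → Prop) :
    Nat.card {a // P a ∧ Q a} + Nat.card {a // P a ∧ ¬ Q a} = Nat.card {a // P a} := by
  have hcard := Set.ncard_inter_add_ncard_sdiff_eq_ncard {a | P a} {a | Q a}
  simp only [← Nat.card_coe_set_eq] at hcard
  exact hcard

lemma natCard_orderOf_eq_totient {G : Type*} [Group G] [Finite G] [hG : IsCyclic G] {n : ℕ}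
    (hn : n ∣ Nat.card G) : Nat.card {x : G // orderOf x = n} = φ n := by
  have := Fintype.ofFinite G
  classical
  rw [Nat.card_eq_fintype_card] at hn
  rw [← hG.card_orderOf_eq_totient hn, Nat.card_eq_fintype_card, Fintype.card_subtype]

variable {G : Type*} [Group G]

lemma natCard_orderOf_eq_prime_pow [Finite G] {p : ℕ} (hp : p.Prime) (k : ℕ) :
    Nat.card {x : G // orderOf x = p ^ (k + 1)} =
      Nat.card {x : G // x ^ p ^ (k + 1) = 1} - Nat.card {x : G // x ^ p ^ k = 1} := by
  have := Fact.mk hp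
  have hpow : ∀ x : G, x ^ p ^ k = 1 → x ^ p ^ (k + 1) = 1 := fun x hx => by
    rw [pow_succ, pow_mul, hx, one_pow]
  rw [← natCard_and_add_natCard_and_not (fun x : G => x ^ p ^ (k + 1) = 1) fun x => x ^ p ^ k = 1,
    Nat.card_congr (Equiv.subtypeEquivRight fun x => and_iff_right_of_imp (hpow x)),
    Nat.add_sub_cancel_left]
  refine Nat.card_congr (Equiv.subtypeEquivRight fun x => ⟨fun hx => ?_, fun hx => ?_⟩)
  · refine ⟨hx ▸ pow_orderOf_eq_one x, fun h => ?_⟩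
    exact (Nat.pow_lt_pow_right hp.one_lt k.lt_succ_self).not_ge
      (hx ▸ orderOf_le_of_pow_eq_one (pow_pos hp.pos k) h)
  · exact orderOf_eq_prime_pow hx.2 hx.1

lemma natCard_orderOf_eq_and_mem (H : Subgroup G) (n : ℕ) :
    Nat.card {x : G // orderOf x = n ∧ x ∈ H} = Nat.card {x : H // orderOf x = n} :=
  Nat.card_congr
    { toFun := fun x => ⟨⟨x, x.2.2⟩, by simpa using x.2.1⟩
      invFun := fun x => ⟨x, by simpa using x.2, x.1.2⟩
      left_inv := fun _ => rfl
      right_inv := fun _ => rfl }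

lemma natCard_isCyclic_subgroup_mul_totient [Finite G] (n : ℕ) :
    Nat.card {H : Subgroup G // Nat.card H = n ∧ IsCyclic H} * φ n =
      Nat.card {x : G // orderOf x = n} := by
  refine (natCard_eq_mul_of_existsUnique
    (r := fun (H : {H : Subgroup G // _}) (x : {x : G // _}) => (x : G) ∈ H.1) ?_ ?_).symm
  · rintro ⟨x, rfl⟩
    refine ⟨⟨zpowers x, Nat.card_zpowers x, inferInstance⟩, mem_zpowers x, ?_⟩
    rintro ⟨H, hcard, _⟩ hxH
    exact Subtype.ext (eq_of_le_of_card_ge (zpowers_le.2 hxH)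
      (hcard.trans (Nat.card_zpowers x).symm).le).symm
  · rintro ⟨H, rfl, hcyc⟩
    rw [← natCard_orderOf_eq_totient dvd_rfl, ← natCard_orderOf_eq_and_mem]
    exact Nat.card_congr (Equiv.subtypeSubtypeEquivSubtypeInter _ _)

/-- The pairs of elements of prime order `p` that generate distinct subgroups; in an elementary
abelian group they are the linearly independent pairs over the field with `p` elements. -/
def IsIndepPair (p : ℕ) (x : G × G) : Prop :=
  orderOf x.1 = p ∧ orderOf x.2 = p ∧ x.2 ∉ zpowers x.1

variable {p : ℕ}

lemma natCard_isIndepPair [Finite G] (hp : p.Prime) :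
    Nat.card {x : G × G // IsIndepPair p x} =
      Nat.card {x : G // orderOf x = p} * (Nat.card {x : G // orderOf x = p} - (p - 1)) := by
  refine natCard_eq_mul_of_existsUnique
    (r := fun (a : {x : G // _}) (x : {x : G × G // _}) => x.1.1 = a)
    (fun x => ⟨⟨x.1.1, x.2.1⟩, rfl, fun a ha => Subtype.ext ha.symm⟩) ?_
  rintro ⟨x, hx⟩
  have hmem : Nat.card {y // orderOf y = p ∧ y ∈ zpowers x} = p - 1 := by
    rw [natCard_orderOf_eq_and_mem, natCard_orderOf_eq_totient (by rw [Nat.card_zpowers, hx]),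
      Nat.totient_prime hp]
  rw [← hmem, ← natCard_and_add_natCard_and_not _ fun y => y ∈ zpowers x, Nat.add_sub_cancel_left]
  exact Nat.card_congr
    { toFun := fun y => ⟨y.1.1.2, y.1.2.2.1, fun h => y.1.2.2.2 (Eq.symm y.2 ▸ h)⟩
      invFun := fun y => ⟨⟨(x, y), hx, y.2⟩, rfl⟩
      left_inv := fun y => Subtype.ext (Subtype.ext (Prod.ext (Eq.symm y.2) rfl))
      right_inv := fun _ => rfl }

lemma IsIndepPair.not_isCyclic [Finite G] {x : G × G} (hp : p.Prime) (hx : IsIndepPair p x) :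
    ¬ IsCyclic G := by
  intro hG
  have hcard := natCard_isIndepPair (G := G) hp
  rw [natCard_orderOf_eq_totient (hx.1 ▸ orderOf_dvd_natCard x.1), Nat.totient_prime hp,
    Nat.sub_self, mul_zero, Finite.card_eq_zero_iff] at hcard
  exact hcard.false ⟨x, hx⟩

lemma isIndepPair_coe {H : Subgroup G} {x : H × H} :
    IsIndepPair p ((x.1 : G), (x.2 : G)) ↔ IsIndepPair p x := by
  simp [IsIndepPair, mem_zpowers_iff, Subtype.ext_iff]

lemma natCard_isIndepPair_of_not_isCyclic (hp : p.Prime) (hG : Nat.card G = p ^ 2)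
    (hcyc : ¬ IsCyclic G) :
    Nat.card {x : G × G // IsIndepPair p x} = (p ^ 2 - 1) * (p ^ 2 - p) := by
  have : Finite G := Nat.finite_of_card_ne_zero (hG ▸ pow_ne_zero 2 hp.ne_zero)
  have hexp := (not_isCyclic_iff_exponent_eq_prime hp hG).1 hcyc
  have horder : Nat.card {x : G // orderOf x = p} = p ^ 2 - 1 := by
    rw [← hG, ← Nat.card_unique (α := {x : G // x = 1})]
    simpa [← hexp, Monoid.pow_exponent_eq_one] using natCard_orderOf_eq_prime_pow (G := G) hp 0
  rw [natCard_isIndepPair hp, horder, Nat.sub_sub, Nat.add_sub_cancel' hp.one_le]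

end SubgroupCount

section CommSubgroupCount

open Subgroup

variable {G : Type*} [CommGroup G] {p : ℕ}

lemma IsIndepPair.natCard_zpowers_sup_zpowers {x : G × G} (hp : p.Prime)
    (hx : IsIndepPair p x) : Nat.card ↥(zpowers x.1 ⊔ zpowers x.2) = p ^ 2 := by
  obtain ⟨h₁, h₂, hx⟩ := hx
  have hdisj : zpowers x.1 ⊓ zpowers x.2 = ⊥ := by
    have : Finite (zpowers x.2) :=
      Nat.finite_of_card_ne_zero ((Nat.card_zpowers x.2).trans h₂ ▸ hp.ne_zero)
    have hdvd := card_dvd_of_le (inf_le_right : zpowers x.1 ⊓ zpowers x.2 ≤ zpowers x.2)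
    rw [Nat.card_zpowers, h₂, Nat.dvd_prime hp] at hdvd
    refine card_eq_one.1 (hdvd.resolve_right fun h => hx ?_)
    exact (inf_eq_right.1 (eq_of_le_of_card_ge inf_le_right
      (by rw [h, Nat.card_zpowers, h₂]))) (mem_zpowers x.2)
  rw [← relIndex_bot_left, ← relIndex_mul_relIndex ⊥ (zpowers x.2) _ bot_le le_sup_right,
    relIndex_sup_right, ← inf_relIndex_right (zpowers x.2), inf_comm, hdisj,
    relIndex_bot_left, relIndex_bot_left, Nat.card_zpowers, Nat.card_zpowers, h₁, h₂, sq]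

lemma natCard_not_isCyclic_subgroup_mul [Finite G] (hp : p.Prime) :
    Nat.card {H : Subgroup G // Nat.card H = p ^ 2 ∧ ¬ IsCyclic H} *
        ((p ^ 2 - 1) * (p ^ 2 - p)) =
      Nat.card {x : G // orderOf x = p} * (Nat.card {x : G // orderOf x = p} - (p - 1)) := by
  rw [← natCard_isIndepPair hp]
  refine (natCard_eq_mul_of_existsUnique (r := fun (H : {H : Subgroup G // _})
    (x : {x : G × G // _}) => x.1.1 ∈ H.1 ∧ x.1.2 ∈ H.1) ?_ ?_).symm
  · rintro ⟨x, hx⟩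
    have hle := (le_sup_left : _ ≤ zpowers x.1 ⊔ zpowers x.2) (mem_zpowers x.1)
    have hle' := (le_sup_right : _ ≤ zpowers x.1 ⊔ zpowers x.2) (mem_zpowers x.2)
    have hcard := hx.natCard_zpowers_sup_zpowers hp
    refine ⟨⟨_, hcard, IsIndepPair.not_isCyclic hp (x := (⟨x.1, hle⟩, ⟨x.2, hle'⟩))
      (isIndepPair_coe.1 hx)⟩, ⟨hle, hle'⟩, ?_⟩
    rintro ⟨H, hH, _⟩ ⟨hx₁, hx₂⟩
    exact Subtype.ext (eq_of_le_of_card_ge (sup_le (zpowers_le.2 hx₁) (zpowers_le.2 hx₂))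
      (hH.trans hcard.symm).le).symm
  · rintro ⟨H, hH, hcyc⟩
    rw [← natCard_isIndepPair_of_not_isCyclic hp hH hcyc]
    exact Nat.card_congr
      { toFun := fun x => ⟨(⟨_, x.2.1⟩, ⟨_, x.2.2⟩), isIndepPair_coe.1 x.1.2⟩
        invFun := fun x => ⟨⟨(x.1.1, x.1.2), isIndepPair_coe.2 x.2⟩, x.1.1.2, x.1.2.2⟩
        left_inv := fun _ => rfl
        right_inv := fun _ => rfl }

-- `a` and `b` are the numbers of cyclic and of noncyclic subgroups of order `p ^ 2`.
lemma add_mul_sub_one_mul_sq_sub_one {p q a b : ℕ} (hp : 0 < p) (hq : 0 < q)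
    (hpq : p - 1 ∣ q - 1) (ha : a * (p * (p - 1)) = q ^ 2 - q)
    (hb : b * ((p ^ 2 - 1) * (p ^ 2 - p)) = (q - 1) * (q - 1 - (p - 1))) :
    (a + b) * ((p - 1) * (p ^ 2 - 1)) = (q - 1) * (p * q - 1) := by
  obtain ⟨r, rfl⟩ : ∃ r, p = r + 1 := Nat.exists_eq_add_of_le' hp
  obtain ⟨c, hc⟩ := hpq
  obtain rfl : q = c * r + 1 := by
    rw [← Nat.sub_add_cancel hq, hc, Nat.add_sub_cancel, mul_comm]
  rw [Nat.add_sub_cancel] at *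
  have hp₁ : (r + 1) ^ 2 - 1 = r * (r + 2) := Nat.sub_eq_of_eq_add (by ring)
  have hp₂ : (r + 1) ^ 2 - (r + 1) = r * (r + 1) := Nat.sub_eq_of_eq_add (by ring)
  have hq₂ : (c * r + 1) ^ 2 - (c * r + 1) = c * r * (c * r + 1) :=
    Nat.sub_eq_of_eq_add (by ring)
  have hpq : (r + 1) * (c * r + 1) - 1 = r * (c * (r + 1) + 1) :=
    Nat.sub_eq_of_eq_add (by ring)
  rw [hq₂] at ha
  rw [hp₁, hp₂, Nat.add_sub_cancel, ← Nat.sub_one_mul] at hb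
  rw [hp₁, hpq, Nat.add_sub_cancel]
  refine Nat.eq_of_mul_eq_mul_left hp ?_
  clear hc
  cases c with
  | zero =>
    simp only [zero_mul, mul_zero] at ha hb ⊢
    linear_combination r * (r + 2) * ha + hb
  | succ d =>
    rw [Nat.add_sub_cancel] at hb
    linear_combination r * (r + 2) * ha + hb

lemma natCard_subgroup_prime_sq_mul [Finite G] (hp : p.Prime) {q : ℕ}
    (h₁ : Nat.card {x : G // x ^ p = 1} = q) (h₂ : Nat.card {x : G // x ^ p ^ 2 = 1} = q ^ 2) :
    Nat.card {H : Subgroup G // Nat.card H = p ^ 2} * ((p - 1) * (p ^ 2 - 1)) =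
      (q - 1) * (p * q - 1) := by
  have hcard_p : Nat.card {x : G // orderOf x = p} = q - 1 := by
    simpa [h₁] using natCard_orderOf_eq_prime_pow (G := G) hp 0
  have hcyc_p := natCard_isCyclic_subgroup_mul_totient (G := G) p
  have hcyc := natCard_isCyclic_subgroup_mul_totient (G := G) (p ^ 2)
  have hnon := natCard_not_isCyclic_subgroup_mul (G := G) hp
  rw [hcard_p, Nat.totient_prime hp] at hcyc_p
  rw [natCard_orderOf_eq_prime_pow hp 1, pow_one, h₁, h₂, Nat.totient_prime_pow_succ hp,
    pow_one] at hcyc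
  rw [hcard_p] at hnon
  rw [← natCard_and_add_natCard_and_not _ fun H : Subgroup G => IsCyclic H]
  generalize Nat.card {H : Subgroup G // Nat.card H = p ^ 2 ∧ IsCyclic H} = a at *
  generalize Nat.card {H : Subgroup G // Nat.card H = p ^ 2 ∧ ¬ IsCyclic H} = b at *
  generalize Nat.card {H : Subgroup G // Nat.card H = p ∧ IsCyclic H} = c at *
  have hq : 0 < q := h₁ ▸ Nat.card_pos_iff.2 ⟨⟨1, one_pow p⟩, inferInstance⟩
  exact add_mul_sub_one_mul_sq_sub_one hp.pos hq (Dvd.intro_left c hcyc_p) hcyc hnon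

end CommSubgroupCount

/-! ### Kummer theory -/

section KummerPairing

open scoped IsMulCommutative

/-- The group `Fˣ / (Fˣ)ⁿ`. -/
abbrev PowerClassGroup (n : ℕ) (F : Type*) [Field F] : Type _ :=
  Fˣ ⧸ (powMonoidHom n : Fˣ →* Fˣ).range

variable {n : ℕ} {F : Type*} [Field F] {L : Type*} [Field L] [Algebra F L]

/-- `x ∈ Lˣ` is an `n`-th root of some representative of the class `q ∈ Fˣ / (Fˣ)ⁿ`. -/
def IsKummerRoot (q : PowerClassGroup n F) (x : Lˣ) : Prop :=
  ∃ a : Fˣ, (a : PowerClassGroup n F) = q ∧ x ^ n = Units.map (algebraMap F L) a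

namespace IsKummerRoot

variable {q r : PowerClassGroup n F} {x y : Lˣ}

protected lemma one : IsKummerRoot (1 : PowerClassGroup n F) (1 : Lˣ) :=
  ⟨1, rfl, by simp⟩

protected lemma mul (hx : IsKummerRoot q x) (hy : IsKummerRoot r y) :
    IsKummerRoot (q * r) (x * y) := by
  obtain ⟨a, rfl, ha⟩ := hx
  obtain ⟨b, rfl, hb⟩ := hy
  exact ⟨a * b, rfl, by rw [mul_pow, ha, hb, map_mul]⟩

protected lemma inv (hx : IsKummerRoot q x) : IsKummerRoot q⁻¹ x⁻¹ := by
  obtain ⟨a, rfl, ha⟩ := hx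
  exact ⟨a⁻¹, rfl, by rw [inv_pow, ha, map_inv]⟩

protected lemma map {M : Type*} [Field M] [Algebra F M] (f : L →ₐ[F] M) (hx : IsKummerRoot q x) :
    IsKummerRoot q (Units.map (f : L →* M) x) := by
  obtain ⟨a, ha, hx⟩ := hx
  refine ⟨a, ha, ?_⟩
  rw [← map_pow, hx]
  ext
  simp

end IsKummerRoot

lemma exists_units_map_mul_eq_of_pow_eq [NeZero n] {ζ : F}
    (hζ : IsPrimitiveRoot ζ n) {x y : Lˣ} (h : x ^ n = y ^ n) :
    ∃ c : Fˣ, x = Units.map (algebraMap F L) c * y := by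
  have hpow : ((x / y : Lˣ) : L) ^ n = 1 := by
    rw [← Units.val_pow_eq_pow_val, div_pow, h, div_self', Units.val_one]
  obtain ⟨i, -, hi⟩ :=
    (hζ.map_of_injective (algebraMap F L).injective).eq_pow_of_pow_eq_one hpow
  refine ⟨(hζ.isUnit (NeZero.ne n)).unit ^ i, ?_⟩
  rw [← div_eq_iff_eq_mul]
  ext
  simpa using hi.symm

lemma IsKummerRoot.exists_units_map_mul_eq [NeZero n] {ζ : F} (hζ : IsPrimitiveRoot ζ n)
    {q : PowerClassGroup n F} {x y : Lˣ} (hx : IsKummerRoot q x) (hy : IsKummerRoot q y) :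
    ∃ c : Fˣ, x = Units.map (algebraMap F L) c * y := by
  obtain ⟨a, rfl, ha⟩ := hx
  obtain ⟨b, hab, hb⟩ := hy
  obtain ⟨c, hc⟩ := QuotientGroup.eq.1 hab
  have hxy : x ^ n = (Units.map (algebraMap F L) c * y) ^ n := by
    rw [mul_pow, hb, ha, ← map_pow, ← map_mul, mul_comm, ← mul_inv_cancel_left b a, ← hc,
      powMonoidHom_apply]
  obtain ⟨d, hd⟩ := exists_units_map_mul_eq_of_pow_eq hζ hxy
  exact ⟨d * c, by rw [hd, map_mul, mul_assoc]⟩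

lemma smul_units_map_algebraMap (σ : Gal(L/F)) (c : Fˣ) :
    σ • Units.map (algebraMap F L : F →* L) c = Units.map (algebraMap F L : F →* L) c := by
  ext
  simp

lemma smul_div_eq_of_eq_units_map_mul {c : Fˣ} {x y : Lˣ}
    (h : x = Units.map (algebraMap F L) c * y) (σ : Gal(L/F)) : σ • x / x = σ • y / y := by
  rw [h, smul_mul', smul_units_map_algebraMap, mul_div_mul_left_eq_div]

variable (n F L) in
/-- The subgroup of classes in `Fˣ / (Fˣ)ⁿ` that become trivial in `Lˣ / (Lˣ)ⁿ`. -/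
def kummerSubgroup : Subgroup (PowerClassGroup n F) where
  carrier := {q | ∃ x : Lˣ, IsKummerRoot q x}
  one_mem' := ⟨1, .one⟩
  mul_mem' := fun ⟨x, hx⟩ ⟨y, hy⟩ => ⟨x * y, hx.mul hy⟩
  inv_mem' := fun ⟨x, hx⟩ => ⟨x⁻¹, hx.inv⟩

/-- A chosen `n`-th root in `L` of a class in `kummerSubgroup n F L`. -/
noncomputable def kummerRoot (q : kummerSubgroup n F L) : Lˣ :=
  q.2.choose

lemma isKummerRoot_kummerRoot (q : kummerSubgroup n F L) : IsKummerRoot q.1 (kummerRoot q) :=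
  q.2.choose_spec

lemma IsKummerRoot.smul_div_eq [NeZero n] {ζ : F} (hζ : IsPrimitiveRoot ζ n)
    {q : PowerClassGroup n F} {x y : Lˣ} (hx : IsKummerRoot q x) (hy : IsKummerRoot q y)
    (σ : Gal(L/F)) : σ • x / x = σ • y / y :=
  let ⟨_, hc⟩ := hx.exists_units_map_mul_eq hζ hy
  smul_div_eq_of_eq_units_map_mul hc σ

lemma IsKummerRoot.smul_smul_div [NeZero n] {ζ : F} (hζ : IsPrimitiveRoot ζ n)
    {q : PowerClassGroup n F} {x : Lˣ} (hx : IsKummerRoot q x) (σ τ : Gal(L/F)) :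
    (σ * τ) • x / x = (σ • x / x) * (τ • x / x) := by
  rw [hx.smul_div_eq hζ (hx.map τ.toAlgHom) σ]
  have : Units.map ((τ.toAlgHom : L →ₐ[F] L) : L →* L) x = τ • x := rfl
  rw [this, mul_smul, div_mul_div_cancel]

variable (L) in
/-- The Kummer pairing `(σ, q) ↦ σ(α) / α`, where `α` is any `n`-th root of `q`. -/
noncomputable def kummerPairing [NeZero n] {ζ : F} (hζ : IsPrimitiveRoot ζ n) :
    Gal(L/F) →* kummerSubgroup n F L →* Lˣ where
  toFun σ :=
    { toFun := fun q => σ • kummerRoot q / kummerRoot q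
      map_one' := by
        rw [(isKummerRoot_kummerRoot 1).smul_div_eq hζ .one, smul_one, div_self']
      map_mul' := fun q r => by
        rw [(isKummerRoot_kummerRoot (q * r)).smul_div_eq hζ
          ((isKummerRoot_kummerRoot q).mul (isKummerRoot_kummerRoot r)), smul_mul',
          mul_div_mul_comm] }
  map_one' := MonoidHom.ext fun q => by simp
  map_mul' σ τ := MonoidHom.ext fun q => (isKummerRoot_kummerRoot q).smul_smul_div hζ σ τ

lemma kummerPairing_apply_eq [NeZero n] {ζ : F} (hζ : IsPrimitiveRoot ζ n) {x : Lˣ}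
    {q : kummerSubgroup n F L} (hx : IsKummerRoot q.1 x) (σ : Gal(L/F)) :
    kummerPairing L hζ σ q = σ • x / x :=
  (isKummerRoot_kummerRoot q).smul_div_eq hζ hx σ

lemma kummerPairing_flip_injective [IsGalois F L] [NeZero n] {ζ : F} (hζ : IsPrimitiveRoot ζ n) :
    Function.Injective (kummerPairing L hζ).flip := by
  refine (injective_iff_map_eq_one _).2 fun q hq => ?_
  have hfix : ∀ σ : Gal(L/F), σ (kummerRoot q : L) = kummerRoot q := fun σ =>
    congrArg Units.val <| div_eq_one.1
      (DFunLike.congr_fun hq σ : σ • kummerRoot q / kummerRoot q = 1)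
  obtain ⟨c, hc⟩ := (InfiniteGalois.mem_range_algebraMap_iff_fixed _).2 hfix
  have hc₀ : c ≠ 0 := fun h => (kummerRoot q).ne_zero (by rw [← hc, h, map_zero])
  obtain ⟨a, ha, hroot⟩ := isKummerRoot_kummerRoot q
  refine Subtype.ext (ha ▸ (QuotientGroup.eq_one_iff a).2 ⟨Units.mk0 c hc₀, ?_⟩)
  ext
  apply (algebraMap F L).injective
  simpa [hc] using congrArg Units.val hroot

lemma natCard_monoidHom_units_le (G : Type*) [Group G] [Finite G] (L : Type*) [Field L] :
    Nat.card (G →* Lˣ) ≤ Nat.card G := by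
  have := Fintype.ofFinite G
  have := Fintype.ofFinite (G →* Lˣ)
  have hindep : LinearIndependent L fun χ : G →* Lˣ => (fun g => (χ g : L) : G → L) :=
    (linearIndependent_monoidHom G L).comp (fun χ => (Units.coeHom L).comp χ) fun _ _ h =>
      MonoidHom.ext fun g => Units.ext (DFunLike.congr_fun h g)
  simpa using hindep.fintype_card_le_finrank

variable [FiniteDimensional F L] [IsGalois F L] [NeZero n] {ζ : F} (hζ : IsPrimitiveRoot ζ n)
include hζ

lemma finite_kummerSubgroup : Finite (kummerSubgroup n F L) :=
  .of_injective _ (kummerPairing_flip_injective hζ)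

lemma natCard_kummerSubgroup_le : Nat.card (kummerSubgroup n F L) ≤ Module.finrank F L := by
  rw [← IsGalois.card_aut_eq_finrank]
  exact (Nat.card_le_card_of_injective _ (kummerPairing_flip_injective hζ)).trans
    (natCard_monoidHom_units_le _ _)

lemma kummerPairing_flip_surjective (hexp : ∀ σ : Gal(L/F), σ ^ n = 1) :
    Function.Surjective (kummerPairing L hζ).flip := by
  intro χ
  have hfix : ∀ σ τ : Gal(L/F), τ • χ σ = χ σ := fun σ τ => by
    obtain ⟨c, hc⟩ := exists_units_map_mul_eq_of_pow_eq (y := (1 : Lˣ)) hζ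
      (by rw [← map_pow, hexp, map_one, one_pow] : χ σ ^ n = 1 ^ n)
    rw [hc, mul_one, smul_units_map_algebraMap]
  obtain ⟨x, hx⟩ := groupCohomology.isMulCoboundary₁_of_isMulCocycle₁_of_aut_to_units χ
    fun σ τ => by rw [map_mul, hfix, mul_comm]
  have hxn : ∀ σ : Gal(L/F), σ ((x ^ n : Lˣ) : L) = (x ^ n : Lˣ) := fun σ => by
    refine congrArg Units.val (div_eq_one.1 ?_ : σ • x ^ n = x ^ n)
    rw [smul_pow', ← div_pow, hx, ← map_pow, hexp, map_one]
  obtain ⟨a, ha⟩ := (IsGalois.mem_range_algebraMap_iff_fixed _).2 hxn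
  have ha₀ : a ≠ 0 := fun h => (x ^ n).ne_zero (by rw [← ha, h, map_zero])
  have hroot : IsKummerRoot (Units.mk0 a ha₀ : PowerClassGroup n F) x :=
    ⟨_, rfl, Units.ext ha.symm⟩
  refine ⟨⟨_, x, hroot⟩, MonoidHom.ext fun σ => ?_⟩
  rw [MonoidHom.flip_apply, kummerPairing_apply_eq hζ hroot, hx]

lemma natCard_kummerSubgroup [IsMulCommutative Gal(L/F)] (hexp : ∀ σ : Gal(L/F), σ ^ n = 1) :
    Nat.card (kummerSubgroup n F L) = Module.finrank F L := by
  have : HasEnoughRootsOfUnity L n :=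
    ⟨⟨algebraMap F L ζ, hζ.map_of_injective (algebraMap F L).injective⟩, inferInstance⟩
  have : HasEnoughRootsOfUnity L (Monoid.exponent Gal(L/F)) :=
    .of_dvd L (Monoid.exponent_dvd_of_forall_pow_eq_one hexp)
  rw [← IsGalois.card_aut_eq_finrank,
    ← CommGroup.card_monoidHom_of_hasEnoughRootsOfUnity Gal(L/F) L]
  exact Nat.card_eq_of_bijective _
    ⟨kummerPairing_flip_injective hζ, kummerPairing_flip_surjective hζ hexp⟩

end KummerPairing

section RadicalExtension

open Polynomial IntermediateField

variable {n : ℕ} {F Ω : Type*} [Field F] [Field Ω] [Algebra F Ω]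

lemma exists_isKummerRoot [IsAlgClosed Ω] [NeZero n] (q : PowerClassGroup n F) :
    ∃ x : Ωˣ, IsKummerRoot q x := by
  obtain ⟨a, rfl⟩ := QuotientGroup.mk_surjective q
  obtain ⟨z, hz⟩ := IsAlgClosed.exists_pow_nat_eq (algebraMap F Ω a) (NeZero.pos n)
  have hz₀ : z ≠ 0 := by
    rintro rfl
    rw [zero_pow (NeZero.ne n)] at hz
    exact (Units.map (algebraMap F Ω : F →* Ω) a).ne_zero hz.symm
  exact ⟨Units.mk0 z hz₀, a, rfl, Units.ext hz⟩

variable (Ω) in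
/-- The subextension of `Ω / F` generated by all `n`-th roots of the classes in `H`. -/
def radicalExtension (H : Subgroup (PowerClassGroup n F)) : IntermediateField F Ω :=
  adjoin F {x | ∃ u : Ωˣ, ↑u = x ∧ ∃ q ∈ H, IsKummerRoot q u}

variable {H : Subgroup (PowerClassGroup n F)}

lemma IsKummerRoot.mem_radicalExtension {q : PowerClassGroup n F} {u : Ωˣ}
    (hu : IsKummerRoot q u) (hq : q ∈ H) : (u : Ω) ∈ radicalExtension Ω H :=
  subset_adjoin F _ ⟨u, rfl, q, hq, hu⟩

lemma IsKummerRoot.exists_of_mem {E : IntermediateField F Ω} {q : PowerClassGroup n F} {u : Ωˣ}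
    (hu : IsKummerRoot q u) (hE : (u : Ω) ∈ E) :
    ∃ v : Eˣ, IsKummerRoot q v ∧ Units.map (E.val : E →* Ω) v = u := by
  obtain ⟨a, rfl, ha⟩ := hu
  refine ⟨Units.mk0 ⟨u, hE⟩ fun h => u.ne_zero (congrArg Subtype.val h), ⟨a, rfl, ?_⟩,
    Units.ext rfl⟩
  exact Units.ext (Subtype.ext (congrArg Units.val ha))

lemma le_kummerSubgroup_radicalExtension [IsAlgClosed Ω] [NeZero n] :
    H ≤ kummerSubgroup n F (radicalExtension Ω H) := by
  intro q hq
  obtain ⟨u, hu⟩ := exists_isKummerRoot (Ω := Ω) q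
  obtain ⟨v, hv, -⟩ := hu.exists_of_mem (hu.mem_radicalExtension hq)
  exact ⟨v, hv⟩

lemma radicalExtension_kummerSubgroup_le [NeZero n] {ζ : F} (hζ : IsPrimitiveRoot ζ n)
    (E : IntermediateField F Ω) : radicalExtension Ω (kummerSubgroup n F E) ≤ E := by
  refine adjoin_le_iff.2 ?_
  rintro _ ⟨u, rfl, q, ⟨v, hv⟩, hu⟩
  obtain ⟨c, rfl⟩ := hu.exists_units_map_mul_eq hζ (hv.map E.val)
  exact E.mul_mem (E.algebraMap_mem c) v.1.2

lemma isGalois_radicalExtension [Normal F Ω] [NeZero (n : F)] :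
    IsGalois F (radicalExtension Ω H) where
  to_normal := by
    refine normal_iff_forall_map_le.2 fun σ => ?_
    rw [radicalExtension, adjoin_map, adjoin_le_iff]
    rintro _ ⟨_, ⟨u, rfl, q, hq, hu⟩, rfl⟩
    exact (hu.map σ).mem_radicalExtension hq
  to_isSeparable := by
    refine (isSeparable_adjoin_iff_isSeparable F Ω).2 ?_
    rintro _ ⟨u, rfl, q, -, a, -, hu⟩
    refine (separable_X_pow_sub_C (a : F) (NeZero.ne (n : F)) a.ne_zero).of_dvd (minpoly.dvd F _ ?_)
    simpa [sub_eq_zero] using congrArg Units.val hu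

lemma kummerPairing_comp_inclusion_injective [NeZero n] {ζ : F} (hζ : IsPrimitiveRoot ζ n)
    (hH : H ≤ kummerSubgroup n F (radicalExtension Ω H)) :
    Function.Injective ((MonoidHom.compHom' (Subgroup.inclusion hH)).comp
      (kummerPairing (radicalExtension Ω H) hζ)) := by
  intro σ τ hστ
  suffices (σ : radicalExtension Ω H →ₐ[F] radicalExtension Ω H) = τ from
    AlgEquiv.ext fun x => DFunLike.congr_fun this x
  refine adjoin_algHom_ext F ?_
  rintro _ ⟨u, rfl, q, hq, hu⟩
  obtain ⟨v, hv, hvu⟩ := hu.exists_of_mem (hu.mem_radicalExtension hq)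
  have hdiv : kummerPairing _ hζ σ ⟨q, hH hq⟩ = kummerPairing _ hζ τ ⟨q, hH hq⟩ :=
    DFunLike.congr_fun hστ ⟨q, hq⟩
  rw [kummerPairing_apply_eq hζ hv, kummerPairing_apply_eq hζ hv] at hdiv
  subst hvu
  exact congrArg Units.val (div_left_injective hdiv)

end RadicalExtension

section KummerCorrespondence

open IntermediateField

variable {n : ℕ} {F Ω : Type*} [Field F] [Field Ω] [Algebra F Ω]
  [IsAlgClosed Ω] [NeZero n] {ζ : F} (hζ : IsPrimitiveRoot ζ n)
  (H : Subgroup (PowerClassGroup n F))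
include hζ

lemma mul_comm_gal_radicalExtension (σ τ : Gal(radicalExtension Ω H/F)) : σ * τ = τ * σ := by
  apply kummerPairing_comp_inclusion_injective hζ le_kummerSubgroup_radicalExtension
  rw [map_mul, map_mul, mul_comm]

variable [Finite H]

lemma finite_gal_radicalExtension : Finite Gal(radicalExtension Ω H/F) :=
  .of_injective _ (kummerPairing_comp_inclusion_injective hζ le_kummerSubgroup_radicalExtension)

variable [Normal F Ω]

lemma finrank_radicalExtension_le :
    Module.finrank F (radicalExtension Ω H) ≤ Nat.card H := by
  have := hζ.neZero'
  have := isGalois_radicalExtension (Ω := Ω) (H := H)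
  have := finite_gal_radicalExtension (Ω := Ω) hζ H
  have := IsGalois.finiteDimensional_of_finite F (radicalExtension Ω H)
  rw [← IsGalois.card_aut_eq_finrank]
  exact (Nat.card_le_card_of_injective _ (kummerPairing_comp_inclusion_injective hζ
    le_kummerSubgroup_radicalExtension)).trans (natCard_monoidHom_units_le _ _)

lemma kummerSubgroup_radicalExtension_and_finrank :
    kummerSubgroup n F (radicalExtension Ω H) = H ∧
      Module.finrank F (radicalExtension Ω H) = Nat.card H := by
  have := hζ.neZero'
  have := isGalois_radicalExtension (Ω := Ω) (H := H)
  have := finite_gal_radicalExtension (Ω := Ω) hζ H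
  have := IsGalois.finiteDimensional_of_finite F (radicalExtension Ω H)
  have := finite_kummerSubgroup (L := radicalExtension Ω H) hζ
  have hle := le_kummerSubgroup_radicalExtension (Ω := Ω) (H := H)
  have h₁ := natCard_kummerSubgroup_le (L := radicalExtension Ω H) hζ
  have h₂ := finrank_radicalExtension_le (Ω := Ω) hζ H
  exact ⟨(Subgroup.eq_of_le_of_card_ge hle (h₁.trans h₂)).symm,
    h₂.antisymm ((Subgroup.card_le_of_le hle).trans h₁)⟩

omit [Finite H]

lemma radicalExtension_kummerSubgroup (E : IntermediateField F Ω) [FiniteDimensional F E]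
    [IsGalois F E] [IsMulCommutative Gal(E/F)] (hexp : ∀ σ : Gal(E/F), σ ^ n = 1) :
    radicalExtension Ω (kummerSubgroup n F E) = E := by
  have := finite_kummerSubgroup (L := E) hζ
  refine eq_of_le_of_finrank_eq (radicalExtension_kummerSubgroup_le hζ E) ?_
  rw [(kummerSubgroup_radicalExtension_and_finrank hζ _).2, natCard_kummerSubgroup hζ hexp]

variable (Ω) in
theorem natCard_abelian_finrank_eq {d : ℕ} (hd : d ∣ n) :
    Nat.card {E : IntermediateField F Ω //
        Module.finrank F E = d ∧ IsGalois F E ∧ ∀ σ τ : Gal(E/F), σ * τ = τ * σ} =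
      Nat.card {H : Subgroup (PowerClassGroup n F) // Nat.card H = d} := by
  have := hζ.neZero'
  have hd₀ : d ≠ 0 := fun h => NeZero.ne n (Nat.eq_zero_of_zero_dvd (h ▸ hd))
  have hkummer (E : IntermediateField F Ω) (hE : Module.finrank F E = d ∧ IsGalois F E ∧
      ∀ σ τ : Gal(E/F), σ * τ = τ * σ) :
      Nat.card (kummerSubgroup n F E) = d ∧ radicalExtension Ω (kummerSubgroup n F E) = E := by
    obtain ⟨hfin, _, hcomm⟩ := hE
    have : FiniteDimensional F E := Module.finite_of_finrank_pos (hfin ▸ hd₀.bot_lt)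
    have : IsMulCommutative Gal(E/F) := ⟨⟨hcomm⟩⟩
    have hexp (σ : Gal(E/F)) : σ ^ n = 1 := by
      refine orderOf_dvd_iff_pow_eq_one.1 ((orderOf_dvd_natCard σ).trans ?_)
      rwa [IsGalois.card_aut_eq_finrank, hfin]
    exact ⟨(natCard_kummerSubgroup hζ hexp).trans hfin, radicalExtension_kummerSubgroup hζ E hexp⟩
  have hradical (H : Subgroup (PowerClassGroup n F)) (hH : Nat.card H = d) :
      kummerSubgroup n F (radicalExtension Ω H) = H ∧
        Module.finrank F (radicalExtension Ω H) = d := by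
    have : Finite H := Nat.finite_of_card_ne_zero (hH ▸ hd₀)
    exact hH ▸ kummerSubgroup_radicalExtension_and_finrank hζ H
  exact Nat.card_congr
    { toFun := fun E => ⟨kummerSubgroup n F E.1, (hkummer _ E.2).1⟩
      invFun := fun H => ⟨radicalExtension Ω H.1, (hradical _ H.2).2, isGalois_radicalExtension,
        mul_comm_gal_radicalExtension hζ H.1⟩
      left_inv := fun E => Subtype.ext (hkummer _ E.2).2
      right_inv := fun H => Subtype.ext (hradical _ H.2).1 }

end KummerCorrespondence

/-! ### Powers in local fields -/

section SubgroupIndex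

open Subgroup

variable {G : Type*} [CommGroup G]

lemma relIndex_map_mul_natCard_ker {A : Subgroup G} (P : G →* G) (hA : A.map P ≤ A)
    (hfin : A.index ≠ 0) :
    (A.map P).relIndex A * Nat.card P.ker = P.range.index * Nat.card ↥(A ⊓ P.ker) := by
  have hmap : (A.map P).relIndex A * A.index = (A ⊔ P.ker).index * P.range.index := by
    rw [relIndex_mul_index hA, index_map]
  have hsup : A.relIndex P.ker * (A ⊔ P.ker).index = A.index := by
    rw [← relIndex_sup_left, relIndex_mul_index le_sup_left]
  have hker : Nat.card ↥(A ⊓ P.ker) * A.relIndex P.ker = Nat.card P.ker := by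
    rw [← inf_relIndex_right, ← relIndex_bot_left, ← relIndex_bot_left,
      relIndex_mul_relIndex _ _ _ bot_le inf_le_right]
  refine Nat.eq_of_mul_eq_mul_left (Nat.pos_of_ne_zero (hsup ▸ hfin :)) ?_
  rw [← hker]
  rw [← hsup] at hmap
  linear_combination Nat.card ↥(A ⊓ P.ker) * A.relIndex P.ker * hmap

lemma relIndex_sup_sup_of_disjoint {X X' Y Y' : Subgroup G} (hX : X' ≤ X) (hY : Y' ≤ Y)
    (hXY : Disjoint X Y) :
    (X' ⊔ Y').relIndex (X ⊔ Y) = X'.relIndex X * Y'.relIndex Y := by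
  have key {X Y Y' : Subgroup G} (hY : Y' ≤ Y) (hXY : Disjoint X Y) :
      (X ⊔ Y').relIndex (X ⊔ Y) = Y'.relIndex Y := by
    have hinf : (X ⊔ Y') ⊓ Y = Y' := by
      rw [sup_comm, sup_inf_assoc_of_le _ hY, hXY.eq_bot, sup_bot_eq]
    rw [← sup_eq_right.2 hY, ← sup_assoc, relIndex_sup_left, sup_eq_right.2 hY,
      ← inf_relIndex_right, hinf]
  rw [← relIndex_mul_relIndex _ (X ⊔ Y') _ (sup_le_sup_right hX _)
    (sup_le_sup_left hY _), key hY hXY, sup_comm X', sup_comm X, key hX (hXY.mono_right hY).symm]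

lemma relIndex_zpowers_pow {G : Type*} [Group G] {g : G} (hg : ¬IsOfFinOrder g) (n : ℕ) :
    (zpowers (g ^ n)).relIndex (zpowers g) = n := by
  have hinj : Function.Injective (zpowersHom G g) := injective_zpow_iff_not_isOfFinOrder.2 hg
  have hmap : zpowers (g ^ n) = (zpowers (Multiplicative.ofAdd (n : ℤ))).map (zpowersHom G g) := by
    simp [MonoidHom.map_zpowers, zpowersHom_apply]
  have hrange : zpowers g = (⊤ : Subgroup (Multiplicative ℤ)).map (zpowersHom G g) := by
    rw [← MonoidHom.range_eq_map]
    rfl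
  rw [hmap, hrange, relIndex_map_map_of_injective _ _ hinj, relIndex_top_right]
  exact Int.index_zmultiples n

end SubgroupIndex

section AddSubgroupIndex

lemma relIndex_map_eq_of_relIndex_ne_zero {G : Type*} [AddGroup G] {A B : AddSubgroup G}
    (P : G →+ G) (hP : Function.Injective P) (hA : A.map P ≤ A) (hB : B.map P ≤ B) (hAB : A ≤ B)
    (hfin : A.relIndex B ≠ 0) :
    (A.map P).relIndex A = (B.map P).relIndex B := by
  refine Nat.eq_of_mul_eq_mul_right (Nat.pos_of_ne_zero hfin) ?_
  rw [AddSubgroup.relIndex_mul_relIndex _ _ _ hA hAB, mul_comm,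
    ← AddSubgroup.relIndex_map_map_of_injective A B hP,
    AddSubgroup.relIndex_mul_relIndex _ _ _ (AddSubgroup.map_mono hAB) hB]

lemma relIndex_pi_const {ι G : Type*} [Fintype ι] [AddGroup G] (H K : AddSubgroup G) :
    (AddSubgroup.pi Set.univ fun _ : ι => H).relIndex (.pi Set.univ fun _ => K) =
      H.relIndex K ^ Fintype.card ι := by
  have hrange : (K.subtype.compLeft ι).range = .pi Set.univ fun _ => K := by
    ext x
    refine ⟨?_, fun hx => ⟨fun i => ⟨x i, hx i trivial⟩, rfl⟩⟩
    rintro ⟨y, rfl⟩ i -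
    exact (y i).2
  have hcomap : (AddSubgroup.pi Set.univ fun _ : ι => H).comap (K.subtype.compLeft ι) =
      .pi Set.univ fun _ => H.addSubgroupOf K := rfl
  rw [← hrange, ← AddSubgroup.index_comap, hcomap, AddSubgroup.index_pi, Finset.prod_const,
    Finset.card_univ, AddSubgroup.relIndex]

lemma relIndex_ne_zero_of_isOpen_of_isCompact {G : Type*} [AddGroup G] [TopologicalSpace G]
    [IsTopologicalAddGroup G] {H K : AddSubgroup G} (hH : IsOpen (H : Set G))
    (hK : IsCompact (K : Set G)) : H.relIndex K ≠ 0 := by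
  have := isCompact_iff_compactSpace.1 hK
  have := AddSubgroup.quotient_finite_of_isOpen (H.addSubgroupOf K)
    (hH.preimage continuous_subtype_val)
  exact Nat.card_pos.ne'

lemma relIndex_map_eq_of_isOpen_of_isCompact {G : Type*} [AddGroup G] [TopologicalSpace G]
    [IsTopologicalAddGroup G] {A B : AddSubgroup G} (P : G →+ G) (hP : Function.Injective P)
    (hA : A.map P ≤ A) (hA_open : IsOpen (A : Set G)) (hA_compact : IsCompact (A : Set G))
    (hB : B.map P ≤ B) (hB_open : IsOpen (B : Set G)) (hB_compact : IsCompact (B : Set G)) :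
    (A.map P).relIndex A = (B.map P).relIndex B := by
  have hAB : (A ⊓ B).map P ≤ A ⊓ B := (AddSubgroup.map_inf_le A B P).trans (inf_le_inf hA hB)
  have hopen : IsOpen ((A ⊓ B : AddSubgroup G) : Set G) := hA_open.inter hB_open
  rw [← relIndex_map_eq_of_relIndex_ne_zero P hP hAB hA inf_le_left
      (relIndex_ne_zero_of_isOpen_of_isCompact hopen hA_compact),
    relIndex_map_eq_of_relIndex_ne_zero P hP hAB hB inf_le_right
      (relIndex_ne_zero_of_isOpen_of_isCompact hopen hB_compact)]

end AddSubgroupIndex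

section ClosedBall

open scoped NNReal

variable {V : Type*} [SeminormedAddCommGroup V] [IsUltrametricDist V]

variable (V) in
/-- The closed ball of radius `r` around `0`, a subgroup since the norm is nonarchimedean. -/
def closedBallAddSubgroup (r : ℝ≥0) : AddSubgroup V where
  carrier := {x | ‖x‖₊ ≤ r}
  zero_mem' := by simp
  add_mem' := fun hx hy => (IsUltrametricDist.nnnorm_add_le_max _ _).trans (max_le hx hy)
  neg_mem' := by simp

variable {r : ℝ≥0} {x : V}

lemma mem_closedBallAddSubgroup : x ∈ closedBallAddSubgroup V r ↔ ‖x‖₊ ≤ r := .rfl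

lemma coe_closedBallAddSubgroup :
    (closedBallAddSubgroup V r : Set V) = Metric.closedBall 0 r := by
  ext
  simp [mem_closedBallAddSubgroup, ← NNReal.coe_le_coe]

lemma closedBallAddSubgroup_pi {ι : Type*} [Fintype ι] :
    closedBallAddSubgroup (ι → V) r = .pi Set.univ fun _ => closedBallAddSubgroup V r := by
  ext x
  simp [AddSubgroup.mem_pi, mem_closedBallAddSubgroup, pi_nnnorm_le_iff]

lemma isOpen_closedBallAddSubgroup (hr : r ≠ 0) : IsOpen (closedBallAddSubgroup V r : Set V) := by
  rw [coe_closedBallAddSubgroup]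
  exact IsUltrametricDist.isOpen_closedBall _ (NNReal.coe_ne_zero.2 hr)

lemma isCompact_closedBallAddSubgroup [ProperSpace V] :
    IsCompact (closedBallAddSubgroup V r : Set V) :=
  coe_closedBallAddSubgroup (V := V) ▸ isCompact_closedBall 0 (r : ℝ)

end ClosedBall

section ScalarMap

open scoped NNReal

variable {K V : Type*} [NormedField K] [NormedAddCommGroup V] [NormedSpace K V]
  [IsUltrametricDist V] {c : K}

lemma map_smul_closedBallAddSubgroup (hc : c ≠ 0) (r : ℝ≥0) :
    (closedBallAddSubgroup V r).map (DistribSMul.toAddMonoidHom V c) =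
      closedBallAddSubgroup V (‖c‖₊ * r) := by
  ext x
  refine ⟨?_, fun hx => ⟨c⁻¹ • x, ?_, smul_inv_smul₀ hc x⟩⟩
  · rintro ⟨y, hy, rfl⟩
    exact (nnnorm_smul c y).trans_le (mul_le_mul_right hy _)
  · rwa [SetLike.mem_coe, mem_closedBallAddSubgroup, nnnorm_smul, nnnorm_inv,
      inv_mul_le_iff₀ (nnnorm_pos.2 hc)]

lemma map_smul_closedBallAddSubgroup_one (hc : c ≠ 0) :
    (closedBallAddSubgroup V 1).map (DistribSMul.toAddMonoidHom V c) =
      closedBallAddSubgroup V ‖c‖₊ := by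
  rw [map_smul_closedBallAddSubgroup hc, mul_one]

lemma map_smul_closedBallAddSubgroup_le (hc : ‖c‖₊ ≤ 1) (r : ℝ≥0) :
    (closedBallAddSubgroup V r).map (DistribSMul.toAddMonoidHom V c) ≤
      closedBallAddSubgroup V r := by
  rintro _ ⟨x, hx, rfl⟩
  exact (nnnorm_smul c x).trans_le (mul_le_of_le_one_of_le hc hx)

end ScalarMap

lemma relIndex_closedBall_eq_pow_finrank {K V : Type*} [NontriviallyNormedField K]
    [IsUltrametricDist K] [ProperSpace K] [NormedAddCommGroup V] [NormedSpace K V]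
    [IsUltrametricDist V] [FiniteDimensional K V] {c : K} (hc : c ≠ 0) (hc₁ : ‖c‖₊ ≤ 1) :
    (closedBallAddSubgroup V ‖c‖₊).relIndex (closedBallAddSubgroup V 1) =
      (closedBallAddSubgroup K ‖c‖₊).relIndex (closedBallAddSubgroup K 1) ^
        Module.finrank K V := by
  have := FiniteDimensional.proper K V
  let e : (Fin (Module.finrank K V) → K) ≃L[K] V := ContinuousLinearEquiv.ofFinrankEq (by simp)
  have hcomm (A : AddSubgroup (Fin (Module.finrank K V) → K)) :
      (A.map (e : _ →+ V)).map (DistribSMul.toAddMonoidHom V c) =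
        (A.map (DistribSMul.toAddMonoidHom _ c)).map (e : _ →+ V) := by
    rw [AddSubgroup.map_map, AddSubgroup.map_map]
    congr 1
    ext x
    simp
  rw [← map_smul_closedBallAddSubgroup_one hc, ← relIndex_map_eq_of_isOpen_of_isCompact
      (A := (closedBallAddSubgroup (Fin (Module.finrank K V) → K) 1).map (e : _ →+ V)), hcomm,
    AddSubgroup.relIndex_map_map_of_injective _ _ e.injective,
    map_smul_closedBallAddSubgroup_one hc, closedBallAddSubgroup_pi, closedBallAddSubgroup_pi,
    relIndex_pi_const, Fintype.card_fin]
  · exact smul_right_injective V hc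
  · rw [hcomm]
    exact AddSubgroup.map_mono (map_smul_closedBallAddSubgroup_le hc₁ 1)
  · exact e.toHomeomorph.isOpenMap _ (isOpen_closedBallAddSubgroup one_ne_zero)
  · exact isCompact_closedBallAddSubgroup.image e.continuous
  · exact map_smul_closedBallAddSubgroup_le hc₁ 1
  · exact isOpen_closedBallAddSubgroup one_ne_zero
  · exact isCompact_closedBallAddSubgroup

section Padic

variable (p : ℕ) [Fact p.Prime]

lemma range_padicIntCoe_eq_closedBallAddSubgroup :
    (PadicInt.Coe.ringHom (p := p)).toAddMonoidHom.range = closedBallAddSubgroup ℚ_[p] 1 := by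
  ext x
  exact ⟨fun ⟨y, hy⟩ => hy ▸ y.2, fun hx => ⟨⟨x, hx⟩, rfl⟩⟩

lemma relIndex_closedBall_padic {n : ℕ} (hn : n ≠ 0) :
    (closedBallAddSubgroup ℚ_[p] ‖(n : ℚ_[p])‖₊).relIndex (closedBallAddSubgroup ℚ_[p] 1) =
      p ^ padicValNat p n := by
  have hcomap : (closedBallAddSubgroup ℚ_[p] ‖(n : ℚ_[p])‖₊).comap
      (PadicInt.Coe.ringHom (p := p)).toAddMonoidHom =
      (PadicInt.toZModPow (p := p) (padicValNat p n)).toAddMonoidHom.ker := by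
    ext x
    have hnorm : ‖(n : ℚ_[p])‖ = (p : ℝ) ^ (-padicValNat p n : ℤ) := by
      rw [Padic.norm_eq_zpow_neg_valuation (Nat.cast_ne_zero.2 hn), Padic.valuation_natCast]
    have hmem := PadicInt.norm_le_pow_iff_mem_span_pow x (padicValNat p n)
    rw [← PadicInt.ker_toZModPow, ← hnorm] at hmem
    exact hmem
  rw [← range_padicIntCoe_eq_closedBallAddSubgroup, ← AddSubgroup.index_comap, hcomap,
    AddSubgroup.index_ker, AddMonoidHom.range_eq_top.2, AddSubgroup.card_top, Nat.card_zmod]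
  exact ZMod.ringHom_surjective _

end Padic

section Powers

variable {F : Type*} [NormedField F] {ϖ : Fˣ}

lemma nnnorm_val_zpow_eq_one_iff (hϖ : ‖(ϖ : F)‖₊ < 1) {k : ℤ} :
    ‖((ϖ ^ k : Fˣ) : F)‖₊ = 1 ↔ k = 0 := by
  rw [Units.val_zpow_eq_zpow_val, nnnorm_zpow, zpow_eq_one_iff_right₀ zero_le hϖ.ne]

lemma not_isOfFinOrder_of_nnnorm_lt_one (hϖ : ‖(ϖ : F)‖₊ < 1) : ¬IsOfFinOrder ϖ := by
  rw [isOfFinOrder_iff_zpow_eq_one]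
  rintro ⟨k, hk, h⟩
  exact hk ((nnnorm_val_zpow_eq_one_iff hϖ).1 (by simp [h]))

lemma exists_nnnorm_zpow_mul_mem_Icc (hϖ : ‖(ϖ : F)‖₊ < 1) (v : Fˣ) :
    ∃ k : ℤ, ‖((ϖ ^ k * v : Fˣ) : F)‖₊ ∈ Set.Icc ‖(ϖ : F)‖₊ 1 := by
  have hϖ₀ : 0 < ‖(ϖ : F)‖₊ := nnnorm_pos.2 ϖ.ne_zero
  obtain ⟨k, hk₁, hk₂⟩ := exists_mem_Ico_zpow (nnnorm_pos.2 v.ne_zero) ((one_lt_inv₀ hϖ₀).2 hϖ)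
  rw [inv_zpow, inv_le_iff_one_le_mul₀' (zpow_pos hϖ₀ _)] at hk₁
  rw [inv_zpow, ← one_div, lt_div_iff₀' (zpow_pos hϖ₀ _)] at hk₂
  refine ⟨k + 1, ?_, ?_⟩ <;> rw [Units.val_mul, Units.val_zpow_eq_zpow_val, nnnorm_mul, nnnorm_zpow]
  · rw [zpow_add_one₀ hϖ₀.ne', mul_right_comm]
    exact le_mul_of_one_le_left' hk₁
  · exact hk₂.le

end Powers

section PrincipalUnits

open scoped NNReal
open IsUltrametricDist

variable {F : Type*} [NormedField F] [IsUltrametricDist F] {r s : ℝ≥0}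

lemma nnnorm_eq_one_of_nnnorm_sub_one_lt {x : F} (hx : ‖x - 1‖₊ < 1) : ‖x‖₊ = 1 := by
  have h := nnnorm_eq_of_add_nnnorm_lt_max (x := x) (y := -1)
  rw [← sub_eq_add_neg, nnnorm_neg, nnnorm_one] at h
  exact h (hx.trans_le (le_max_right _ _))

variable (F r) in
/-- The group of units `u` of norm `1` with `‖u - 1‖ ≤ r`. The condition on `‖u‖` is automatic for
`r < 1` and makes this a group for every `r`. -/
def principalUnits : Subgroup Fˣ where
  carrier := {u | ‖(u : F)‖₊ = 1 ∧ ‖(u - 1 : F)‖₊ ≤ r}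
  one_mem' := by simp
  mul_mem' := by
    rintro u v ⟨hu, hu'⟩ ⟨hv, hv'⟩
    refine ⟨by rw [Units.val_mul, nnnorm_mul, hu, hv, one_mul], ?_⟩
    rw [Units.val_mul, show (u * v - 1 : F) = u * (v - 1) + (u - 1) by ring]
    exact (nnnorm_add_le_max _ _).trans
      (max_le (by rwa [nnnorm_mul, hu, one_mul]) hu')
  inv_mem' := by
    rintro u ⟨hu, hu'⟩
    have hinv : ‖((u⁻¹ : Fˣ) : F)‖₊ = 1 := by
      rw [Units.val_inv_eq_inv_val, nnnorm_inv, hu, inv_one]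
    refine ⟨hinv, ?_⟩
    rw [show ((u⁻¹ : Fˣ) - 1 : F) = (u⁻¹ : Fˣ) * (1 - u) by rw [mul_sub, u.inv_mul, mul_one],
      nnnorm_mul, hinv, one_mul, ← nnnorm_neg, neg_sub]
    exact hu'

lemma principalUnits_mono (hrs : r ≤ s) : principalUnits F r ≤ principalUnits F s :=
  fun _ hu => ⟨hu.1, hu.2.trans hrs⟩

lemma mem_principalUnits {u : Fˣ} (hr : r < 1) :
    u ∈ principalUnits F r ↔ ‖(u - 1 : F)‖₊ ≤ r :=
  ⟨And.right, fun hu => ⟨nnnorm_eq_one_of_nnnorm_sub_one_lt (hu.trans_lt hr), hu⟩⟩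

lemma exists_mem_principalUnits_val_eq {x : F} (hr : r < 1) (hx : ‖x - 1‖₊ ≤ r) :
    ∃ u ∈ principalUnits F r, (u : F) = x := by
  have hx₀ : x ≠ 0 := by
    rintro rfl
    simp [hr.not_ge] at hx
  exact ⟨Units.mk0 x hx₀, (mem_principalUnits hr).2 hx, rfl⟩

lemma inv_mul_mem_principalUnits {u v : Fˣ} (hr : r < 1) :
    u⁻¹ * v ∈ principalUnits F r ↔ ‖(v - u : F)‖₊ ≤ r * ‖(u : F)‖₊ := by
  have huv : ((u⁻¹ * v : Fˣ) - 1 : F) = (v - u) / u := by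
    rw [sub_div, div_self u.ne_zero, Units.val_mul, Units.val_inv_eq_inv_val, inv_mul_eq_div]
  rw [mem_principalUnits hr, huv, nnnorm_div, div_le_iff₀ (nnnorm_pos.2 u.ne_zero)]

lemma relIndex_principalUnits (hs : s < 1) (hr : r < 1) :
    (principalUnits F s).relIndex (principalUnits F r) =
      (closedBallAddSubgroup F s).relIndex (closedBallAddSubgroup F r) := by
  let e : principalUnits F r ≃ closedBallAddSubgroup F r :=
    Equiv.ofBijective (fun u => ⟨(u : Fˣ) - 1, u.2.2⟩) <| by
      refine ⟨fun u v huv => ?_, fun x => ?_⟩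
      · exact Subtype.ext (Units.ext (sub_left_injective (congrArg Subtype.val huv :)))
      · obtain ⟨u, hu, hux⟩ := exists_mem_principalUnits_val_eq (x := (x : F) + 1) hr
          (by simpa only [add_sub_cancel_right] using mem_closedBallAddSubgroup.1 x.2)
        exact ⟨⟨u, hu⟩, Subtype.ext (by simp [hux])⟩
  refine Nat.card_congr (Quotient.congr e fun u v => ?_)
  rw [QuotientGroup.leftRel_apply, QuotientAddGroup.leftRel_apply, Subgroup.mem_subgroupOf,
    AddSubgroup.mem_addSubgroupOf]
  simp only [Subgroup.coe_mul, Subgroup.coe_inv, AddSubgroup.coe_add, AddSubgroup.coe_neg]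
  have he : -(e u).1 + (e v).1 = ((v : Fˣ) - (u : Fˣ) : F) := by
    change -((u : Fˣ) - 1 : F) + ((v : Fˣ) - 1) = _
    ring
  rw [inv_mul_mem_principalUnits hs, u.2.1, mul_one, mem_closedBallAddSubgroup, he]

variable {n : ℕ} {u v : Fˣ}

lemma nnnorm_pow_sub_pow_sub_mul_le (hu : u ∈ principalUnits F r) (hv : v ∈ principalUnits F r) :
    ‖(u ^ n - v ^ n - n * (u - v) : F)‖₊ ≤ r * ‖(u - v : F)‖₊ := by
  have hsum : (u ^ n - v ^ n - n * (u - v) : F) =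
      (∑ i ∈ Finset.range n, ((u ^ i * v ^ (n - 1 - i) : Fˣ) - 1 : F)) * (u - v) := by
    rw [Finset.sum_sub_distrib, sub_mul, ← (Commute.all (u : F) v).geom_sum₂_mul n]
    simp
  rw [hsum, nnnorm_mul]
  gcongr
  exact nnnorm_sum_le_of_forall_le fun i _ => (mul_mem (pow_mem hu _) (pow_mem hv _)).2

lemma nnnorm_pow_sub_pow_eq (hr : r < ‖(n : F)‖₊) (hu : u ∈ principalUnits F r)
    (hv : v ∈ principalUnits F r) : ‖(u ^ n - v ^ n : F)‖₊ = ‖(n : F)‖₊ * ‖(u - v : F)‖₊ := by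
  obtain rfl | huv := eq_or_ne u v
  · simp
  rw [← nnnorm_mul, ← nnnorm_neg (n * (u - v) : F)]
  refine nnnorm_eq_of_add_nnnorm_lt_max (lt_max_of_lt_right ?_)
  rw [← sub_eq_add_neg, nnnorm_neg, nnnorm_mul]
  refine (nnnorm_pow_sub_pow_sub_mul_le hu hv).trans_lt (mul_lt_mul_of_pos_right hr ?_)
  exact nnnorm_pos.2 (sub_ne_zero.2 (Units.val_injective.ne huv))

lemma principalUnits_inf_ker_powMonoidHom (hr : r < ‖(n : F)‖₊) :
    principalUnits F r ⊓ (powMonoidHom n : Fˣ →* Fˣ).ker = ⊥ := by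
  rw [eq_bot_iff]
  rintro u ⟨hu, hun⟩
  have h := nnnorm_pow_sub_pow_eq hr hu (one_mem _)
  rw [← Units.val_pow_eq_pow_val, show u ^ n = 1 from hun, Units.val_one, one_pow, sub_self,
    nnnorm_zero, zero_eq_mul, or_iff_right (zero_le.trans_lt hr).ne', nnnorm_eq_zero,
    sub_eq_zero] at h
  exact Units.ext h

-- The map is Newton's iteration for `x ^ n = w` with the derivative frozen at `1`.
lemma nnnorm_sub_pow_sub_div_sub_le {x y w : F} (hn : (n : F) ≠ 0) (hr : r < 1)
    (hx : ‖x - 1‖₊ ≤ r) (hy : ‖y - 1‖₊ ≤ r) :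
    ‖(x - (x ^ n - w) / n) - (y - (y ^ n - w) / n)‖₊ ≤ r / ‖(n : F)‖₊ * ‖x - y‖₊ := by
  obtain ⟨u, hu, rfl⟩ := exists_mem_principalUnits_val_eq hr hx
  obtain ⟨v, hv, rfl⟩ := exists_mem_principalUnits_val_eq hr hy
  have h : (u - (u ^ n - w) / n) - (v - (v ^ n - w) / n) =
      -(u ^ n - v ^ n - n * (u - v) : F) / n := by
    field_simp
    ring
  rw [h, nnnorm_div, nnnorm_neg, div_mul_eq_mul_div]
  gcongr
  exact nnnorm_pow_sub_pow_sub_mul_le hu hv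

lemma exists_pow_eq_of_mem_principalUnits [CompleteSpace F] (hr : r < ‖(n : F)‖₊)
    {w : Fˣ} (hw : w ∈ principalUnits F (‖(n : F)‖₊ * r)) :
    ∃ u ∈ principalUnits F r, u ^ n = w := by
  have hr₁ : r < 1 := hr.trans_le (nnnorm_natCast_le_one F n)
  have hn : (n : F) ≠ 0 := nnnorm_pos.1 (zero_le.trans_lt hr)
  let f : F → F := fun x => x - (x ^ n - w) / n
  let B : Set F := {x | ‖x - 1‖₊ ≤ r}
  have hlip {x y : F} (hx : x ∈ B) (hy : y ∈ B) : ‖f x - f y‖₊ ≤ r / ‖(n : F)‖₊ * ‖x - y‖₊ :=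
    nnnorm_sub_pow_sub_div_sub_le hn hr₁ hx hy
  have hlt : r / ‖(n : F)‖₊ < 1 := (div_lt_one (nnnorm_pos.2 hn)).2 hr
  have h1 : (1 : F) ∈ B := by simp [B]
  have hmaps : Set.MapsTo f B B := fun x hx => by
    have hf₁ : ‖f 1 - 1‖₊ ≤ r := by
      have : f 1 - 1 = (w - 1) / n := by
        simp only [f, one_pow]
        ring
      rw [this, nnnorm_div, div_le_iff₀' (nnnorm_pos.2 hn)]
      exact hw.2
    change ‖f x - 1‖₊ ≤ r
    rw [← sub_add_sub_cancel]
    refine (nnnorm_add_le_max _ _).trans (max_le ((hlip hx h1).trans ?_) hf₁)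
    exact mul_le_of_le_one_of_le hlt.le hx
  have hB : IsComplete B :=
    (isClosed_le (by fun_prop) continuous_const).isComplete
  obtain ⟨x, hx, hfx, -⟩ := ContractingWith.exists_fixedPoint' hB hmaps
    ⟨hlt, LipschitzWith.of_dist_le_mul fun x y => by
      rw [Subtype.dist_eq, Subtype.dist_eq, dist_eq_norm, dist_eq_norm]
      exact hlip x.2 y.2⟩ h1 (edist_ne_top _ _)
  obtain ⟨u, hu, rfl⟩ := exists_mem_principalUnits_val_eq hr₁ hx
  refine ⟨u, hu, Units.ext ?_⟩
  rw [Units.val_pow_eq_pow_val]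
  have := sub_eq_self.1 hfx
  rwa [div_eq_zero_iff, or_iff_left hn, sub_eq_zero] at this

lemma map_powMonoidHom_principalUnits [CompleteSpace F] (hr : r < ‖(n : F)‖₊) :
    (principalUnits F r).map (powMonoidHom n) = principalUnits F (‖(n : F)‖₊ * r) := by
  ext w
  refine ⟨?_, exists_pow_eq_of_mem_principalUnits hr⟩
  rintro ⟨u, hu, rfl⟩
  refine ⟨(pow_mem hu n).1, ?_⟩
  have h := nnnorm_pow_sub_pow_eq hr hu (one_mem _)
  rw [Units.val_one, one_pow] at h
  rw [powMonoidHom_apply, Units.val_pow_eq_pow_val, h]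
  exact mul_le_mul_right hu.2 _

end PrincipalUnits

section UnitIndex

open scoped NNReal
open IsUltrametricDist Subgroup

variable {F : Type*} [NormedField F] [IsUltrametricDist F] {r : ℝ≥0} {n : ℕ} {ϖ : Fˣ}

lemma relIndex_principalUnits_mul_nnnorm (hϖ : ‖(ϖ : F)‖₊ < 1) (hr : r ≤ 1) :
    (principalUnits F (‖(ϖ : F)‖₊ * r)).relIndex (principalUnits F ‖(ϖ : F)‖₊) =
      (closedBallAddSubgroup F r).relIndex (closedBallAddSubgroup F 1) := by
  rw [relIndex_principalUnits (mul_lt_one_of_lt_of_le hϖ hr) hϖ,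
    ← map_smul_closedBallAddSubgroup ϖ.ne_zero, ← map_smul_closedBallAddSubgroup_one ϖ.ne_zero]
  exact AddSubgroup.relIndex_map_map_of_injective _ _ (smul_right_injective F ϖ.ne_zero)

lemma disjoint_zpowers_principalUnits (hϖ : ‖(ϖ : F)‖₊ < 1) :
    Disjoint (zpowers ϖ) (principalUnits F r) := by
  rw [disjoint_iff, eq_bot_iff]
  rintro _ ⟨⟨k, rfl⟩, hk⟩
  simp [(nnnorm_val_zpow_eq_one_iff hϖ).1 hk.1]

lemma zpowers_sup_principalUnits_inf_ker (hϖ : ‖(ϖ : F)‖₊ < 1) (hr : r < ‖(n : F)‖₊) :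
    (zpowers ϖ ⊔ principalUnits F r) ⊓ (powMonoidHom n : Fˣ →* Fˣ).ker = ⊥ := by
  rw [← principalUnits_inf_ker_powMonoidHom hr]
  refine le_antisymm (le_inf ?_ inf_le_right) (inf_le_inf_right _ le_sup_right)
  rintro x ⟨hx, hxn⟩
  obtain ⟨_, ⟨k, rfl⟩, u, hu, rfl⟩ := mem_sup.1 hx
  dsimp only at hxn ⊢
  have hn : n ≠ 0 := by
    rintro rfl
    simp at hr
  have hnorm : ‖((ϖ ^ k : Fˣ) : F)‖₊ ^ n = 1 := by
    have h : ‖(((ϖ ^ k * u) ^ n : Fˣ) : F)‖₊ = 1 := by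
      rw [show (ϖ ^ k * u) ^ n = 1 from hxn, Units.val_one, nnnorm_one]
    simpa [hu.1] using h
  rw [pow_eq_one_iff_of_nonneg zero_le hn, nnnorm_val_zpow_eq_one_iff hϖ] at hnorm
  simpa [hnorm] using hu

lemma index_zpowers_sup_principalUnits_ne_zero [ProperSpace F] (hϖ : ‖(ϖ : F)‖₊ < 1)
    (hr₀ : r ≠ 0) (hr₁ : r < 1) : (zpowers ϖ ⊔ principalUnits F r).index ≠ 0 := by
  have hϖ₀ : 0 < ‖(ϖ : F)‖₊ := nnnorm_pos.2 ϖ.ne_zero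
  let C : Set F := {x | ‖x‖₊ ∈ Set.Icc ‖(ϖ : F)‖₊ 1}
  have hC : IsCompact C :=
    (isCompact_closedBall (0 : F) 1).of_isClosed_subset
      (isClosed_Icc.preimage continuous_nnnorm) fun x hx => mem_closedBall_zero_iff.2 hx.2
  obtain ⟨T, hTC, hT, hcover⟩ := hC.finite_cover_balls (e := r * ‖(ϖ : F)‖₊) (by positivity)
  have hne {x} (hx : x ∈ T) : x ≠ 0 := nnnorm_pos.1 (hϖ₀.trans_le (hTC hx).1)
  have hsurj : Function.Surjective fun x : T =>
      (Units.mk0 x.1 (hne x.2) : Fˣ ⧸ (zpowers ϖ ⊔ principalUnits F r)) := by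
    intro q
    induction q using QuotientGroup.induction_on with | H v =>
    obtain ⟨k, hk⟩ := exists_nnnorm_zpow_mul_mem_Icc hϖ v
    obtain ⟨x, hx, hvx⟩ := Set.mem_iUnion₂.1 (hcover hk)
    refine ⟨⟨x, hx⟩, QuotientGroup.eq.2 ?_⟩
    have hu : (Units.mk0 x (hne hx))⁻¹ * (ϖ ^ k * v) ∈ principalUnits F r :=
      (inv_mul_mem_principalUnits hr₁).2 <|
        (mem_ball_iff_norm.1 hvx).le.trans (mul_le_mul_right (hTC hx).1 r)
    rw [← inv_mul_cancel_left (ϖ ^ k) v, mul_left_comm]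
    exact mul_mem_sup (inv_mem (zpow_mem (mem_zpowers ϖ) k)) hu
  have := hT.to_subtype
  have := Finite.of_surjective _ hsurj
  exact Nat.card_pos.ne'

lemma relIndex_map_pow_zpowers_sup_principalUnits [CompleteSpace F]
    (hϖ : ‖(ϖ : F)‖₊ < ‖(n : F)‖₊) :
    ((zpowers ϖ ⊔ principalUnits F ‖(ϖ : F)‖₊).map (powMonoidHom n)).relIndex
        (zpowers ϖ ⊔ principalUnits F ‖(ϖ : F)‖₊) =
      n * (closedBallAddSubgroup F ‖(n : F)‖₊).relIndex (closedBallAddSubgroup F 1) := by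
  have hn₁ : ‖(n : F)‖₊ ≤ 1 := nnnorm_natCast_le_one F n
  have hϖ₁ : ‖(ϖ : F)‖₊ < 1 := hϖ.trans_le hn₁
  rw [Subgroup.map_sup, MonoidHom.map_zpowers, map_powMonoidHom_principalUnits hϖ,
    powMonoidHom_apply, mul_comm, relIndex_sup_sup_of_disjoint, relIndex_zpowers_pow,
    relIndex_principalUnits_mul_nnnorm hϖ₁ hn₁]
  · exact not_isOfFinOrder_of_nnnorm_lt_one hϖ₁
  · exact zpowers_le.2 (pow_mem (mem_zpowers ϖ) n)
  · exact principalUnits_mono (mul_le_of_le_one_right' hn₁)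
  · exact disjoint_zpowers_principalUnits hϖ₁

theorem index_range_powMonoidHom_units {F : Type*} [NontriviallyNormedField F]
    [IsUltrametricDist F] [ProperSpace F] {n : ℕ} (hn : (n : F) ≠ 0) :
    (powMonoidHom n : Fˣ →* Fˣ).range.index = n * Nat.card (powMonoidHom n : Fˣ →* Fˣ).ker *
      (closedBallAddSubgroup F ‖(n : F)‖₊).relIndex (closedBallAddSubgroup F 1) := by
  obtain ⟨c, hc₀, hc⟩ := NormedField.exists_norm_lt F (norm_pos_iff.2 hn)
  obtain ⟨ϖ, rfl⟩ := (norm_pos_iff.1 hc₀).isUnit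
  have hϖ : ‖(ϖ : F)‖₊ < ‖(n : F)‖₊ := hc
  have hϖ₁ : ‖(ϖ : F)‖₊ < 1 := hϖ.trans_le (nnnorm_natCast_le_one F n)
  have hle : (zpowers ϖ ⊔ principalUnits F ‖(ϖ : F)‖₊).map (powMonoidHom n) ≤
      zpowers ϖ ⊔ principalUnits F ‖(ϖ : F)‖₊ :=
    map_le_iff_le_comap.2 fun x hx => pow_mem hx n
  have hfin := index_zpowers_sup_principalUnits_ne_zero hϖ₁ (nnnorm_ne_zero_iff.2 ϖ.ne_zero) hϖ₁
  have hker := relIndex_map_mul_natCard_ker (powMonoidHom n) hle hfin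
  rw [zpowers_sup_principalUnits_inf_ker hϖ₁ hϖ, card_bot, mul_one,
    relIndex_map_pow_zpowers_sup_principalUnits hϖ] at hker
  rw [← hker]
  ring

end UnitIndex

theorem index_range_powMonoidHom_units_padic (p : ℕ) [Fact p.Prime] (F : Type*) [Field F]
    [Algebra ℚ_[p] F] [FiniteDimensional ℚ_[p] F] {n : ℕ} (hn : n ≠ 0) :
    (powMonoidHom n : Fˣ →* Fˣ).range.index = n * Nat.card (powMonoidHom n : Fˣ →* Fˣ).ker *
      p ^ (Module.finrank ℚ_[p] F * padicValNat p n) := by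
  let := spectralNorm.nontriviallyNormedField ℚ_[p] F
  let := spectralNorm.normedAlgebra ℚ_[p] F
  have : IsUltrametricDist F :=
    IsUltrametricDist.isUltrametricDist_of_isNonarchimedean_norm
      (isNonarchimedean_spectralNorm (K := ℚ_[p]) (L := F))
  have : ProperSpace F := FiniteDimensional.proper ℚ_[p] F
  have hn₀ : (n : ℚ_[p]) ≠ 0 := Nat.cast_ne_zero.2 hn
  have hnorm : ‖(n : F)‖₊ = ‖(n : ℚ_[p])‖₊ := by
    rw [← map_natCast (algebraMap ℚ_[p] F), nnnorm_algebraMap']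
  have hnF : (n : F) ≠ 0 := nnnorm_ne_zero_iff.1 (hnorm ▸ nnnorm_ne_zero_iff.2 hn₀)
  rw [index_range_powMonoidHom_units hnF, hnorm,
    relIndex_closedBall_eq_pow_finrank hn₀ (IsUltrametricDist.nnnorm_natCast_le_one ℚ_[p] n),
    relIndex_closedBall_padic p hn, ← pow_mul, mul_comm (padicValNat p n)]

/-! ### Extensions of prime square degree -/

section PowerIndex

open Subgroup

variable {G : Type*} [CommGroup G]

lemma natCard_pow_eq_one_eq_index [Finite G] (n : ℕ) :
    Nat.card {x : G // x ^ n = 1} = (powMonoidHom n : G →* G).range.index := by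
  refine Nat.eq_of_mul_eq_mul_right
    (Nat.card_pos (α := (powMonoidHom n : G →* G).range)) ?_
  rw [index_mul_card, ← index_ker]
  exact card_mul_index (powMonoidHom n : G →* G).ker

lemma index_range_powMonoidHom_quotient {N : Subgroup G} {n : ℕ}
    (hN : N ≤ (powMonoidHom n : G →* G).range) :
    (powMonoidHom n : G ⧸ N →* G ⧸ N).range.index = (powMonoidHom n : G →* G).range.index := by
  have hrange : (powMonoidHom n : G ⧸ N →* G ⧸ N).range =
      (powMonoidHom n : G →* G).range.map (QuotientGroup.mk' N) := by
    ext x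
    constructor
    · rintro ⟨y, rfl⟩
      obtain ⟨y, rfl⟩ := QuotientGroup.mk'_surjective N y
      exact ⟨_, ⟨y, rfl⟩, rfl⟩
    · rintro ⟨_, ⟨y, rfl⟩, rfl⟩
      exact ⟨y, rfl⟩
  rw [hrange, index_map_eq _ (QuotientGroup.mk'_surjective N) (by rwa [QuotientGroup.ker_mk'])]

lemma natCard_powerClassGroup_pow_eq_one {F : Type*} [Field F] {n d : ℕ}
    [Finite (PowerClassGroup n F)] (hd : d ∣ n) :
    Nat.card {x : PowerClassGroup n F // x ^ d = 1} = (powMonoidHom d : Fˣ →* Fˣ).range.index := by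
  refine (natCard_pow_eq_one_eq_index (G := PowerClassGroup n F) d).trans
    (index_range_powMonoidHom_quotient ?_)
  obtain ⟨e, rfl⟩ := hd
  rintro _ ⟨x, rfl⟩
  exact ⟨x ^ e, by simp only [powMonoidHom_apply, ← pow_mul, mul_comm]⟩

lemma natCard_ker_powMonoidHom_units {F : Type*} [Field F] {n : ℕ} [NeZero n] {ζ : F}
    (hζ : IsPrimitiveRoot ζ n) : Nat.card (powMonoidHom n : Fˣ →* Fˣ).ker = n :=
  hζ.card_rootsOfUnity

end PowerIndex

theorem stmt18_general {p : ℕ} [Fact p.Prime] (F : Type*) [Field F] [Algebra ℚ_[p] F]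
    [FiniteDimensional ℚ_[p] F] {ℓ : ℕ} (hℓ : ℓ.Prime) {ζ : F} (hζ : IsPrimitiveRoot ζ (ℓ ^ 2))
    {q : ℕ} (hq : q = ℓ ^ 2 * p ^ (Module.finrank ℚ_[p] F * padicValNat p ℓ)) :
    Nat.card {L : IntermediateField F (AlgebraicClosure F) //
        Module.finrank F L = ℓ ^ 2 ∧ IsGalois F L ∧ ∀ σ τ : L ≃ₐ[F] L, σ * τ = τ * σ} *
          ((ℓ - 1) * (ℓ ^ 2 - 1)) = (q - 1) * (ℓ * q - 1) := by
  have : NeZero ℓ := ⟨hℓ.ne_zero⟩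
  have hζ' : IsPrimitiveRoot (ζ ^ ℓ) ℓ := hζ.pow (pow_pos hℓ.pos 2) (sq ℓ)
  have h₁ : (powMonoidHom ℓ : Fˣ →* Fˣ).range.index = q := by
    rw [index_range_powMonoidHom_units_padic p F hℓ.ne_zero, natCard_ker_powMonoidHom_units hζ',
      hq, sq]
  have h₂ : (powMonoidHom (ℓ ^ 2) : Fˣ →* Fˣ).range.index = q ^ 2 := by
    rw [index_range_powMonoidHom_units_padic p F (NeZero.ne _), natCard_ker_powMonoidHom_units hζ,
      hq, padicValNat.pow]
    ring
  have : Finite (PowerClassGroup (ℓ ^ 2) F) := by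
    refine Nat.finite_of_card_ne_zero (h₂.trans_ne (pow_ne_zero 2 ?_))
    rw [hq]
    exact (Nat.mul_pos (pow_pos hℓ.pos 2) (pow_pos (Fact.out : p.Prime).pos _)).ne'
  rw [natCard_abelian_finrank_eq (AlgebraicClosure F) hζ dvd_rfl]
  refine natCard_subgroup_prime_sq_mul (G := PowerClassGroup (ℓ ^ 2) F) hℓ ?_ ?_
  · rw [natCard_powerClassGroup_pow_eq_one (dvd_pow_self ℓ two_ne_zero), h₁]
  · rw [natCard_powerClassGroup_pow_eq_one dvd_rfl, h₂]

lemma sub_one_mul_sub_one_eq (m : ℕ) :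
    (4 * 2 ^ m - 1) * (2 * (4 * 2 ^ m) - 1) = 32 * 2 ^ (2 * m) - 12 * 2 ^ m + 1 := by
  obtain ⟨k, hk⟩ : ∃ k, 2 ^ m = k + 1 := Nat.exists_eq_add_of_le' Nat.one_le_two_pow
  rw [mul_comm 2 m, pow_mul, hk]
  have hsub : 32 * (k + 1) ^ 2 - 12 * (k + 1) = 32 * k ^ 2 + 52 * k + 20 :=
    Nat.sub_eq_of_eq_add (by ring)
  rw [hsub, show 4 * (k + 1) - 1 = 4 * k + 3 by lia,
    show 2 * (4 * (k + 1)) - 1 = 8 * k + 7 by lia]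
  ring

theorem stmt18 (F : Type*) [Field F] [Algebra ℚ_[2] F] [FiniteDimensional ℚ_[2] F]
    (m : ℕ) (hm : Module.finrank ℚ_[2] F = m)
    (hμ4 : ∃ ζ : F, IsPrimitiveRoot ζ 4) :
    Nat.card {L : IntermediateField F (AlgebraicClosure F) //
        Module.finrank F L = 4 ∧ IsGalois F L ∧ ∀ σ τ : L ≃ₐ[F] L, σ * τ = τ * σ} =
      (32 * 2 ^ (2 * m) - 12 * 2 ^ m + 1) / 3 := by
  obtain ⟨ζ, hζ⟩ := hμ4
  have h := stmt18_general (p := 2) F Nat.prime_two hζ rfl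
  rw [padicValNat_self, hm, mul_one] at h
  exact (Nat.div_eq_of_eq_mul_left three_pos ((sub_one_mul_sub_one_eq m).symm.trans h.symm)).symm
end

section
/- Let p be a prime with p ≠ 3 and F a finite extension of ℚ_p, with fixed algebraic closure Ω. If F contains a primitive cube root of unity, then every degree-3 extension of F inside Ω is a Galois (abelian) extension of F. If F does not contain a primitive cube root of unity, then F has exactly 4 extensions of degree 3 inside Ω, exactly one of which is Galois over F. -/
/-! The residue degree of an extension of prime degree `ℓ` divides `ℓ`, so a tame extension `L / F`
of degree `ℓ` is of one of two kinds. Let `q` be the size of the residue field of `F`.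

* If the residue degree is `ℓ`, then `L` contains the primitive `(q ^ ℓ - 1)`-th roots of unity,
  which do not lie in `F`. They generate `L`, so that `L` is unique and Galois over `F`.
* If the residue degree is `1`, then by Hensel's lemma `L` is generated by an `ℓ`-th root of a
  uniformizer `ϖ` of `F`.

When `F` contains the `ℓ`-th roots of unity, Kummer theory makes the second kind Galois. Otherwise
`ℓ` is coprime to `q - 1`, so every unit of the valuation ring is an `ℓ`-th power and `ϖ` can be
fixed once and for all. No extension of degree `ℓ` contains the `ℓ`-th roots of unity, because their
degree over `F` lies strictly between `1` and `ℓ`. Hence the `ℓ` roots of `X ^ ℓ - ϖ` generate `ℓ`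
distinct fields, none of them Galois. -/

open Module Polynomial IsLocalRing IntermediateField
open scoped NormedField Valued

section LocalRing

variable {R : Type*} [CommRing R]

theorem isAdicComplete_maximalIdeal_of_compactSpace [IsLocalRing R] [IsNoetherianRing R]
    [TopologicalSpace R] [IsTopologicalRing R] [CompactSpace R] [T2Space R] :
    IsAdicComplete (maximalIdeal R) R where
  prec' f hf := by
    let ball (n : ℕ) : Set R := {y | f n - y ∈ maximalIdeal R ^ n}
    have ball_succ_subset n : ball (n + 1) ⊆ ball n := fun y hy => by
      have hfn : f n - f (n + 1) ∈ maximalIdeal R ^ n := by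
        simpa [SModEq.sub_mem] using hf n.le_succ
      simpa [ball] using add_mem hfn (Ideal.pow_le_pow_right n.le_succ hy)
    have isClosed_ball n : IsClosed (ball n) :=
      (IsNoetherianRing.isClosed_ideal (maximalIdeal R ^ n)).preimage (by fun_prop)
    obtain ⟨y, hy⟩ :=
      (isClosed_ball 0).isCompact.nonempty_iInter_of_sequence_nonempty_isCompact_isClosed
        ball ball_succ_subset (fun n => ⟨f n, by simp [ball]⟩) isClosed_ball
    exact ⟨y, fun n => by simpa [SModEq.sub_mem, ball] using Set.mem_iInter.mp hy n⟩

theorem henselianLocalRing_of_isAdicComplete [IsLocalRing R]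
    [IsAdicComplete (maximalIdeal R) R] : HenselianLocalRing R where
  is_henselian g hg a h₀ h₁ := HenselianRing.is_henselian g hg a h₀ (h₁.map _)

theorem exists_pow_eq_of_pow_eq_residue [HenselianLocalRing R] {n : ℕ} (hn : IsUnit (n : R))
    {u : R} {a : ResidueField R} (ha : a ≠ 0) (hau : a ^ n = residue R u) :
    ∃ v : R, v ^ n = u ∧ residue R v = a := by
  have hn_residue : (n : ResidueField R) ≠ 0 := by simpa using (hn.map (residue R)).ne_zero
  have hn0 : n ≠ 0 := by rintro rfl; simp at hn_residue
  have hensel := ((HenselianLocalRing.TFAE R).out 0 1 rfl rfl).mp ‹_›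
  obtain ⟨v, hv, hva⟩ := hensel (X ^ n - C u) (monic_X_pow_sub_C u hn0) a
    (by simp [hau, ResidueField.algebraMap_eq]) (by simp [derivative_X_pow, hn_residue, ha])
  exact ⟨v, by simpa [sub_eq_zero] using hv, hva⟩

theorem isUnit_natCast_iff_residue [IsLocalRing R] {n : ℕ} :
    IsUnit (n : R) ↔ (n : ResidueField R) ≠ 0 := by
  rw [← map_natCast (residue R), residue_ne_zero_iff_isUnit]

theorem isUnit_natCast_card_residueField_pow_sub_one [IsLocalRing R]
    [Finite (ResidueField R)] {k : ℕ} (hk : k ≠ 0) :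
    IsUnit ((Nat.card (ResidueField R) ^ k - 1 : ℕ) : R) := by
  have := Fintype.ofFinite (ResidueField R)
  rw [isUnit_natCast_iff_residue, Nat.cast_sub (Nat.one_le_pow _ _ Nat.card_pos)]
  simp [Nat.card_eq_fintype_card, hk]

theorem exists_isPrimitiveRoot_card_residueField_sub_one [HenselianLocalRing R]
    [Finite (ResidueField R)] :
    ∃ ζ : R, IsPrimitiveRoot ζ (Nat.card (ResidueField R) - 1) := by
  obtain ⟨g, hg⟩ := IsCyclic.exists_monoid_generator (α := (ResidueField R)ˣ)
  have hg' : IsPrimitiveRoot (g : ResidueField R) (Nat.card (ResidueField R) - 1) := by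
    rw [← Nat.card_units, ← orderOf_eq_card_of_forall_mem_powers hg, IsPrimitiveRoot.coe_units_iff]
    exact .orderOf g
  obtain ⟨ζ, hζ, hζg⟩ := exists_pow_eq_of_pow_eq_residue
    (by simpa using isUnit_natCast_card_residueField_pow_sub_one (R := R) one_ne_zero) g.ne_zero
    (hg'.pow_eq_one.trans (map_one (residue R)).symm)
  exact ⟨ζ, hζ, fun l hl => hg'.dvd_of_pow_eq_one l (by rw [← hζg, ← map_pow, hl, map_one])⟩

theorem isPrimitiveRoot_residue [IsDomain R] [IsLocalRing R] {n : ℕ} (hn : IsUnit (n : R)) {ζ : R}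
    (hζ : IsPrimitiveRoot ζ n) : IsPrimitiveRoot (residue R ζ) n := by
  have : NeZero (n : ResidueField R) := ⟨isUnit_natCast_iff_residue.1 hn⟩
  have hn0 : 0 < n := Nat.pos_of_ne_zero (by rintro rfl; simp at hn)
  rw [← isRoot_cyclotomic_iff, ← map_cyclotomic n (residue R)]
  exact (hζ.isRoot_cyclotomic hn0).map

theorem not_exists_isPrimitiveRoot_card_residueField_pow_sub_one [IsDomain R] [IsLocalRing R]
    [Finite (ResidueField R)] {k : ℕ} (hk : 1 < k) :
    ¬ ∃ ζ : R, IsPrimitiveRoot ζ (Nat.card (ResidueField R) ^ k - 1) := by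
  rintro ⟨ζ, hζ⟩
  have hres := isPrimitiveRoot_residue (isUnit_natCast_card_residueField_pow_sub_one (by omega)) hζ
  have hq : 1 < Nat.card (ResidueField R) := Finite.one_lt_card
  have hpos : 0 < Nat.card (ResidueField R) ^ k - 1 :=
    Nat.sub_pos_of_lt (Nat.one_lt_pow (by omega) hq)
  have hle : Nat.card (ResidueField R) ^ k - 1 ≤ Nat.card (ResidueField R) - 1 := by
    rw [← Nat.card_units, (hres.isUnit_unit hpos.ne').eq_orderOf]
    exact orderOf_le_card
  have hlt : Nat.card (ResidueField R) < Nat.card (ResidueField R) ^ k := lt_self_pow₀ hq hk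
  omega

theorem coprime_card_residueField_sub_one [HenselianLocalRing R] [Finite (ResidueField R)] {ℓ : ℕ}
    (hℓ : ℓ.Prime) (hR : ¬ ∃ ζ : R, IsPrimitiveRoot ζ ℓ) :
    (Nat.card (ResidueField R) - 1).Coprime ℓ := by
  refine ((Nat.Prime.coprime_iff_not_dvd hℓ).2 fun ⟨d, hd⟩ => hR ?_).symm
  obtain ⟨ζ, hζ⟩ := exists_isPrimitiveRoot_card_residueField_sub_one (R := R)
  exact ⟨ζ ^ d, hζ.pow (Nat.sub_pos_of_lt Finite.one_lt_card) (hd.trans (mul_comm _ _))⟩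

theorem exists_pow_eq_of_isUnit [HenselianLocalRing R] [Finite (ResidueField R)] {ℓ : ℕ}
    (hℓ : ℓ.Prime) (hℓR : IsUnit (ℓ : R)) (hR : ¬ ∃ ζ : R, IsPrimitiveRoot ζ ℓ) {u : R}
    (hu : IsUnit u) : ∃ v : R, v ^ ℓ = u := by
  have hcop : (Nat.card (ResidueField R)ˣ).Coprime ℓ := by
    rw [Nat.card_units]
    exact coprime_card_residueField_sub_one hℓ hR
  obtain ⟨a, ha⟩ := (powCoprime hcop).surjective (hu.map (residue R)).unit
  obtain ⟨v, hv, -⟩ := exists_pow_eq_of_pow_eq_residue hℓR a.ne_zero (congrArg Units.val ha)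
  exact ⟨v, hv⟩

end LocalRing

section FractionRing

variable {R K : Type*} [CommRing R] [Field K] [Algebra R K] [IsFractionRing R K] {n : ℕ}

theorem exists_isPrimitiveRoot_fractionRing_iff [IsIntegrallyClosed R] (hn : 0 < n) :
    (∃ ζ : K, IsPrimitiveRoot ζ n) ↔ ∃ ζ : R, IsPrimitiveRoot ζ n := by
  refine ⟨fun ⟨ζ, hζ⟩ => ?_,
    fun ⟨ζ, hζ⟩ => ⟨_, hζ.map_of_injective (IsFractionRing.injective R K)⟩⟩
  obtain ⟨c, rfl⟩ := IsIntegrallyClosed.exists_algebraMap_eq_of_isIntegral_pow (R := R)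
    hn (hζ.pow_eq_one ▸ isIntegral_one)
  exact ⟨c, hζ.of_map_of_injective (IsFractionRing.injective R K)⟩

theorem pow_ne_algebraMap_irreducible [IsIntegrallyClosed R] {ϖ : R} (hϖ : Irreducible ϖ)
    (hn : 1 < n) (b : K) : b ^ n ≠ algebraMap R K ϖ := by
  intro hb
  obtain ⟨c, rfl⟩ := IsIntegrallyClosed.exists_algebraMap_eq_of_isIntegral_pow (R := R)
    (by omega) (hb ▸ isIntegral_algebraMap)
  rw [← map_pow, (IsFractionRing.injective R K).eq_iff] at hb
  exact not_irreducible_pow hn.ne' (hb ▸ hϖ)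

end FractionRing

theorem exists_monic_irreducible_natDegree_eq {k : Type*} [Field k] [Finite k] {n : ℕ}
    (hn : n ≠ 0) :
    ∃ f : k[X], f.Monic ∧ Irreducible f ∧ f.natDegree = n := by
  have : NeZero n := ⟨hn⟩
  have : Fact (ringChar k).Prime := ⟨CharP.char_is_prime k _⟩
  let l := FiniteField.Extension k (ringChar k) n
  obtain ⟨α, hα⟩ := Field.exists_primitive_element k l
  have hint : IsIntegral k α := .of_finite k α
  refine ⟨minpoly k α, minpoly.monic hint, minpoly.irreducible hint, ?_⟩
  rw [← IntermediateField.adjoin.finrank hint, hα, IntermediateField.finrank_top',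
    FiniteField.finrank_extension]

theorem exists_monic_irreducible_map_residue {R : Type*} [CommRing R] [IsLocalRing R]
    [Finite (ResidueField R)] {n : ℕ} (hn : n ≠ 0) :
    ∃ g : R[X], g.Monic ∧ g.natDegree = n ∧ Irreducible (g.map (residue R)) := by
  obtain ⟨f, hf, hirr, hdeg⟩ := exists_monic_irreducible_natDegree_eq (k := ResidueField R) hn
  obtain ⟨g, rfl, hgf, hg⟩ :=
    lifts_and_natDegree_eq_and_monic (mem_lifts_of_surjective residue_surjective f) hf
  exact ⟨g, hg, hgf.trans hdeg, hirr⟩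

section LocalRingExtension

variable {R S : Type*} [CommRing R] [CommRing S] [Algebra R S] [Module.Finite R S]
  [IsLocalHom (algebraMap R S)]

theorem exists_isPrimitiveRoot_card_residueField_pow_finrank_sub_one [IsLocalRing R]
    [HenselianLocalRing S] [Finite (ResidueField R)] :
    ∃ ζ : S, IsPrimitiveRoot ζ
      (Nat.card (ResidueField R) ^ finrank (ResidueField R) (ResidueField S) - 1) := by
  have := Module.finite_of_finite (ResidueField R) (M := ResidueField S)
  rw [← Module.natCard_eq_pow_finrank]
  exact exists_isPrimitiveRoot_card_residueField_sub_one

theorem natDegree_dvd_finrank_residueField [IsLocalRing R] [IsLocalRing S] {g : R[X]}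
    (hg : g.Monic) (hirr : Irreducible (g.map (residue R))) {α : S} (hα : aeval α g = 0) :
    g.natDegree ∣ finrank (ResidueField R) (ResidueField S) := by
  have hroot : aeval (residue S α) (g.map (residue R)) = 0 := by
    rw [← ResidueField.algebraMap_eq S, ← ResidueField.algebraMap_eq R, aeval_map_algebraMap,
      aeval_algebraMap_apply, hα, map_zero]
  rw [← hg.natDegree_map (residue R), minpoly.eq_of_irreducible_of_monic hirr hroot (hg.map _)]
  exact minpoly.degree_dvd (.of_finite _ _)

variable [IsDomain R] [IsDiscreteValuationRing R] [IsTorsionFree R S]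

theorem ramificationIdx_mul_finrank_residueField [IsLocalRing S] :
    (maximalIdeal S).ramificationIdx R * finrank (ResidueField R) (ResidueField S) =
      finrank R S := by
  let : Unique ((maximalIdeal R).primesOver S) :=
    { default := ⟨maximalIdeal S, inferInstance, inferInstance⟩
      uniq := fun P => Subtype.ext <| by
        have := P.2.1
        have := P.2.2
        exact eq_maximalIdeal (Ideal.IsMaximal.of_liesOver_isMaximal P.1 (maximalIdeal R)) }
  rw [← Ideal.sum_ramification_inertia_eq_finrank (maximalIdeal R) S, Fintype.sum_unique]
  exact congrArg _ (Ideal.inertiaDeg_eq_of_isMaximal (maximalIdeal R) (maximalIdeal S)).symm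

variable [IsDomain S] [IsDiscreteValuationRing S]

theorem associated_algebraMap_pow_ramificationIdx {ϖ : R} (hϖ : Irreducible ϖ) {π : S}
    (hπ : Irreducible π) :
    Associated (algebraMap R S ϖ) (π ^ (maximalIdeal S).ramificationIdx R) := by
  have hmap : (maximalIdeal R).map (algebraMap R S) = Ideal.span {algebraMap R S ϖ} := by
    rw [hϖ.maximalIdeal_eq, Ideal.map_span, Set.image_singleton]
  have hne : algebraMap R S ϖ ≠ 0 := by simpa using hϖ.ne_zero
  obtain ⟨n, hn⟩ := IsDiscreteValuationRing.associated_pow_irreducible hne hπ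
  suffices (maximalIdeal S).ramificationIdx R = n by rwa [this]
  rw [Ideal.IsDedekindDomain.ramificationIdx_eq_multiplicity (maximalIdeal R) _
      (by simpa [hmap] using hϖ.ne_zero), hmap, Ideal.span_singleton_eq_span_singleton.2 hn,
    ← Ideal.span_singleton_pow, ← hπ.maximalIdeal_eq]
  exact multiplicity_pow_self (IsDiscreteValuationRing.not_a_field S)
    (by simpa [Ideal.isUnit_iff] using Ideal.IsPrime.ne_top') n

theorem exists_pow_finrank_eq_algebraMap_irreducible [HenselianLocalRing S]
    (hres : finrank (ResidueField R) (ResidueField S) = 1)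
    (hn : IsUnit (finrank R S : R)) :
    ∃ (ϖ : R) (x : S), Irreducible ϖ ∧ x ^ finrank R S = algebraMap R S ϖ := by
  obtain ⟨ϖ, hϖ⟩ := IsDiscreteValuationRing.exists_irreducible R
  obtain ⟨π, hπ⟩ := IsDiscreteValuationRing.exists_irreducible S
  have he : (maximalIdeal S).ramificationIdx R = finrank R S := by
    rw [← ramificationIdx_mul_finrank_residueField (R := R) (S := S), hres, mul_one]
  obtain ⟨u, hu⟩ := he ▸ associated_algebraMap_pow_ramificationIdx hϖ hπ
  obtain ⟨a, ha⟩ : ∃ a : R, residue S (algebraMap R S a) = residue S u := by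
    obtain ⟨a, ha⟩ := residue_surjective.exists.1
      ((Algebra.finrank_eq_one_iff_bijective_algebraMap.1 hres).2 (residue S u))
    exact ⟨a, by rw [← ha, ResidueField.algebraMap_residue]⟩
  have hua : IsUnit a := by
    rw [← isUnit_map_iff (algebraMap R S), ← residue_ne_zero_iff_isUnit, ha,
      residue_ne_zero_iff_isUnit]
    exact u.isUnit
  -- `a / u` is a unit with residue `1`, hence a power of exponent `finrank R S`.
  obtain ⟨v, hv, -⟩ := exists_pow_eq_of_pow_eq_residue (n := finrank R S)
    (u := ↑u⁻¹ * algebraMap R S a) (a := 1)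
    (by simpa using hn.map (algebraMap R S)) one_ne_zero
    (by rw [one_pow, map_mul, ha, ← map_mul, Units.inv_mul, map_one])
  refine ⟨ϖ * a, π * v, (irreducible_mul_isUnit hua).2 hϖ, ?_⟩
  rw [mul_pow, hv, ← hu]
  simp [mul_assoc]

end LocalRingExtension

section LocalField

variable {K : Type*} [NontriviallyNormedField K] [IsUltrametricDist K]

section ProperSpace

variable [ProperSpace K]

instance compactSpace_integer : CompactSpace 𝒪[K] := by
  rw [← isCompact_univ_iff, Subtype.isCompact_iff]
  convert isCompact_closedBall (0 : K) 1
  ext x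
  simp [Valued.integer.mem_iff]

instance isDiscreteValuationRing_integer : IsDiscreteValuationRing 𝒪[K] :=
  have : (Valued.v (R := K)).IsNontrivial := by
    obtain ⟨x, hx0, hx1⟩ := Valued.integer.exists_norm_coe_lt_one (K := K)
    refine ⟨x, ?_, ?_⟩
    · simpa using hx0
    · simpa [← NNReal.coe_inj] using hx1.ne
  Valued.integer.isDiscreteValuationRing_of_compactSpace

instance henselianLocalRing_integer : HenselianLocalRing 𝒪[K] :=
  have := isAdicComplete_maximalIdeal_of_compactSpace (R := 𝒪[K])
  henselianLocalRing_of_isAdicComplete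

end ProperSpace

theorem isUnit_natCast_integer_iff {n : ℕ} : IsUnit (n : 𝒪[K]) ↔ ‖(n : K)‖ = 1 := by
  simp [Valued.integer.isUnit_iff_norm_eq_one]

section Extension

variable {L : Type*} [NontriviallyNormedField L] [IsUltrametricDist L] [NormedAlgebra K L]

instance hasExtension_valuation : (Valued.v (R := K)).HasExtension (Valued.v (R := L)) :=
  .ofComapInteger <| by ext x; simp [Valued.integer.mem_iff]

instance finite_integer [ProperSpace K] [FiniteDimensional K L] : Module.Finite 𝒪[K] 𝒪[L] := by
  let coord : L →L[K] (Fin (finrank K L) → K) :=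
    (finBasis K L).equivFun.toLinearMap.toContinuousLinearMap
  obtain ⟨d, hd0, hd⟩ := NormedField.exists_norm_lt K (r := (‖coord‖ + 1)⁻¹) (by positivity)
  have hbound (y : 𝒪[L]) i : d * coord y i ∈ 𝒪[K] := by
    rw [Valued.integer.mem_iff, norm_mul]
    calc ‖d‖ * ‖coord y i‖ ≤ (‖coord‖ + 1)⁻¹ * (‖coord‖ + 1) := by
          gcongr
          exact (norm_le_pi_norm _ i).trans <|
            (coord.le_opNorm_of_le (Valued.integer.norm_le_one y)).trans (by simp)
      _ = 1 := inv_mul_cancel₀ (by positivity)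
  let scaledCoord : 𝒪[L] →ₗ[𝒪[K]] (Fin (finrank K L) → 𝒪[K]) :=
    { toFun y i := ⟨d * coord y i, hbound y i⟩
      map_add' y z := by ext; simp [mul_add]
      map_smul' c y := by ext; simp [mul_left_comm] }
  refine .of_injective scaledCoord fun y z hyz => Subtype.ext ?_
  refine (finBasis K L).equivFun.injective (funext fun i => ?_)
  simpa [scaledCoord, coord, norm_pos_iff.1 hd0] using congrArg (fun v => (v i : K)) hyz

theorem finrank_integer : finrank 𝒪[K] 𝒪[L] = finrank K L :=
  (IsFractionRing.finrank_eq 𝒪[K] K 𝒪[L] L).symm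

theorem finrank_residueField_dvd [ProperSpace K] [ProperSpace L] [FiniteDimensional K L] :
    finrank 𝓀[K] 𝓀[L] ∣ finrank K L := by
  rw [← finrank_integer, ← ramificationIdx_mul_finrank_residueField (R := 𝒪[K]) (S := 𝒪[L])]
  exact dvd_mul_left _ _

end Extension

section Spectral

variable [ProperSpace K] {L : Type*} [Field L] [Algebra K L]

theorem exists_isPrimitiveRoot_of_aeval_eq_zero {g : 𝒪[K][X]} (hg : g.Monic)
    (hirr : Irreducible (g.map (residue 𝒪[K]))) (hL : finrank K L = g.natDegree) {α : L}
    (hα : aeval α g = 0) :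
    ∃ ζ : L, IsPrimitiveRoot ζ (Nat.card 𝓀[K] ^ g.natDegree - 1) := by
  have : FiniteDimensional K L :=
    .of_finrank_pos (hL ▸ hg.natDegree_map (residue 𝒪[K]) ▸ hirr.natDegree_pos)
  let := spectralNorm.nontriviallyNormedField K L
  let := spectralNorm.normedAlgebra K L
  have : IsUltrametricDist L :=
    IsUltrametricDist.isUltrametricDist_of_isNonarchimedean_norm
      (isNonarchimedean_spectralNorm (K := K) (L := L))
  have : ProperSpace L := FiniteDimensional.proper K L
  have hint : IsIntegral 𝒪[L] α := IsIntegral.tower_top (R := 𝒪[K]) ⟨g, hg, hα⟩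
  obtain ⟨β, rfl⟩ := IsIntegrallyClosed.isIntegral_iff.1 hint
  have hβ : aeval β g = 0 := by
    rw [aeval_algebraMap_apply] at hα
    exact (IsFractionRing.injective 𝒪[L] L) (by rw [hα, map_zero])
  have hres : finrank 𝓀[K] 𝓀[L] = g.natDegree :=
    dvd_antisymm (hL ▸ finrank_residueField_dvd) (natDegree_dvd_finrank_residueField hg hirr hβ)
  obtain ⟨ζ, hζ⟩ :=
    exists_isPrimitiveRoot_card_residueField_pow_finrank_sub_one (R := 𝒪[K]) (S := 𝒪[L])
  exact ⟨ζ, (hres ▸ hζ).map_of_injective (f := 𝒪[L].subtype) Subtype.val_injective⟩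

theorem exists_finrank_eq_and_isPrimitiveRoot {E : Type*} [Field E] [Algebra K E]
    [IsAlgClosed E] {n : ℕ} (hn : n ≠ 0) :
    ∃ U : IntermediateField K E, finrank K U = n ∧
      ∃ ζ : U, IsPrimitiveRoot ζ (Nat.card 𝓀[K] ^ n - 1) := by
  obtain ⟨g, hg, rfl, hirr⟩ := exists_monic_irreducible_map_residue (R := 𝒪[K]) hn
  have hgK : Irreducible (g.map (algebraMap 𝒪[K] K)) :=
    hg.irreducible_iff_irreducible_map_fraction_map.1 (hg.irreducible_of_irreducible_map _ _ hirr)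
  obtain ⟨α, hα⟩ := IsAlgClosed.exists_aeval_eq_zero E _ (degree_pos_of_irreducible hgK).ne'
  have hmin := minpoly.eq_of_irreducible_of_monic hgK hα (hg.map _)
  have hdeg : finrank K K⟮α⟯ = g.natDegree := by
    rw [IntermediateField.adjoin.finrank ⟨_, hg.map _, hα⟩, ← hmin, hg.natDegree_map]
  refine ⟨K⟮α⟯, hdeg, exists_isPrimitiveRoot_of_aeval_eq_zero hg hirr hdeg
    (α := AdjoinSimple.gen K α) ?_⟩
  rw [← aeval_map_algebraMap K, hmin, aeval_gen_minpoly]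

theorem exists_isPrimitiveRoot_or_exists_pow_eq_irreducible {ℓ : ℕ} (hℓ : ℓ.Prime)
    (hℓK : ‖(ℓ : K)‖ = 1) (hL : finrank K L = ℓ) :
    (∃ ζ : L, IsPrimitiveRoot ζ (Nat.card 𝓀[K] ^ ℓ - 1)) ∨
      ∃ (ϖ : 𝒪[K]) (x : L), Irreducible ϖ ∧ x ^ ℓ = algebraMap K L ϖ := by
  have : FiniteDimensional K L := .of_finrank_pos (hL ▸ hℓ.pos)
  let := spectralNorm.nontriviallyNormedField K L
  let := spectralNorm.normedAlgebra K L
  have : IsUltrametricDist L :=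
    IsUltrametricDist.isUltrametricDist_of_isNonarchimedean_norm
      (isNonarchimedean_spectralNorm (K := K) (L := L))
  have : ProperSpace L := FiniteDimensional.proper K L
  rcases (Nat.dvd_prime hℓ).1 (hL ▸ finrank_residueField_dvd (K := K) (L := L)) with hf | hf
  · right
    obtain ⟨ϖ, x, hϖ, hx⟩ := exists_pow_finrank_eq_algebraMap_irreducible hf
      (by rwa [finrank_integer, hL, isUnit_natCast_integer_iff])
    rw [finrank_integer, hL] at hx
    exact ⟨ϖ, x, hϖ, congrArg Subtype.val hx⟩
  · left
    obtain ⟨ζ, hζ⟩ :=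
      exists_isPrimitiveRoot_card_residueField_pow_finrank_sub_one (R := 𝒪[K]) (S := 𝒪[L])
    exact ⟨ζ, (hf ▸ hζ).map_of_injective (f := 𝒪[L].subtype) Subtype.val_injective⟩

theorem exists_isPrimitiveRoot_or_exists_pow_eq_of_irreducible {ℓ : ℕ} (hℓ : ℓ.Prime)
    (hℓK : ‖(ℓ : K)‖ = 1) (hK : ¬ ∃ ζ : K, IsPrimitiveRoot ζ ℓ) {ϖ : 𝒪[K]} (hϖ : Irreducible ϖ)
    (hL : finrank K L = ℓ) :
    (∃ ζ : L, IsPrimitiveRoot ζ (Nat.card 𝓀[K] ^ ℓ - 1)) ∨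
      ∃ x : L, x ^ ℓ = algebraMap K L ϖ := by
  refine (exists_isPrimitiveRoot_or_exists_pow_eq_irreducible hℓ hℓK hL).imp_right ?_
  rintro ⟨ϖ', x, hϖ', hx⟩
  obtain ⟨u, rfl⟩ := IsDiscreteValuationRing.associated_of_irreducible 𝒪[K] hϖ' hϖ
  rw [exists_isPrimitiveRoot_fractionRing_iff (R := 𝒪[K]) hℓ.pos] at hK
  obtain ⟨v, hv⟩ := exists_pow_eq_of_isUnit hℓ (isUnit_natCast_integer_iff.2 hℓK) hK u.isUnit
  exact ⟨x * algebraMap K L v, by simp [mul_pow, hx, ← hv]⟩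

end Spectral

end LocalField

section PrimeDegree

variable {F E : Type*} [Field F] [Field E] [Algebra F E] {L L' : IntermediateField F E} {ℓ m : ℕ}

theorem adjoin_simple_eq_of_finrank_prime (hL : (finrank F L).Prime) {x : L}
    (hx : x ∉ Set.range (algebraMap F L)) : F⟮(x : E)⟯ = L := by
  have : FiniteDimensional F L := .of_finrank_pos hL.pos
  have hle : F⟮(x : E)⟯ ≤ L := adjoin_simple_le_iff.2 x.2
  refine eq_of_le_of_finrank_eq hle
    (((Nat.dvd_prime hL).1 (finrank_dvd_of_le_right hle)).resolve_left fun h => hx ?_)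
  rw [IntermediateField.finrank_eq_one_iff, adjoin_simple_eq_bot_iff] at h
  exact h.imp fun b hb => Subtype.ext hb

theorem adjoin_simple_eq_of_isPrimitiveRoot_of_finrank_prime
    (hF : ¬ ∃ ζ : F, IsPrimitiveRoot ζ m) (hL : (finrank F L).Prime) {ζ : L}
    (hζ : IsPrimitiveRoot ζ m) : F⟮(ζ : E)⟯ = L := by
  refine adjoin_simple_eq_of_finrank_prime hL ?_
  rintro ⟨ζ', rfl⟩
  exact hF ⟨ζ', hζ.of_map_of_injective (algebraMap F L).injective⟩

theorem adjoin_simple_eq_of_pow_eq_of_finrank_prime {a : F} (ha : ∀ b : F, b ^ m ≠ a)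
    (hL : (finrank F L).Prime) {x : L} (hx : x ^ m = algebraMap F L a) : F⟮(x : E)⟯ = L := by
  refine adjoin_simple_eq_of_finrank_prime hL ?_
  rintro ⟨b, rfl⟩
  exact ha b ((algebraMap F L).injective (by rw [map_pow, hx]))

theorem eq_of_isPrimitiveRoot_of_finrank_prime [NeZero m] (hF : ¬ ∃ ζ : F, IsPrimitiveRoot ζ m)
    (hL : (finrank F L).Prime) (hL' : (finrank F L').Prime) (hLm : ∃ ζ : L, IsPrimitiveRoot ζ m)
    (hLm' : ∃ ζ : L', IsPrimitiveRoot ζ m) : L = L' := by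
  obtain ⟨ζ, hζ⟩ := hLm
  obtain ⟨ζ', hζ'⟩ := hLm'
  have hζE : IsPrimitiveRoot (ζ : E) m := by simpa
  have hζE' : IsPrimitiveRoot (ζ' : E) m := by simpa
  obtain ⟨i, -, hi⟩ := hζE.eq_pow_of_pow_eq_one hζE'.pow_eq_one
  have hmem : (ζ' : E) ∈ L := hi ▸ pow_mem ζ.2 i
  have hζL : IsPrimitiveRoot (⟨ζ', hmem⟩ : L) m :=
    hζE'.of_map_of_injective (f := algebraMap L E) Subtype.val_injective
  exact (adjoin_simple_eq_of_isPrimitiveRoot_of_finrank_prime hF hL hζL).symm.trans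
    (adjoin_simple_eq_of_isPrimitiveRoot_of_finrank_prime hF hL' hζ')

theorem isGalois_of_adjoin_simple_eq_of_pow_eq [NeZero m] {x : E} (hxL : F⟮x⟯ = L) {a : F}
    (ha : a ≠ 0) (hx : x ^ m = algebraMap F E a) (hLm : ∃ ζ : L, IsPrimitiveRoot ζ m) :
    IsGalois F L := by
  subst hxL
  obtain ⟨ζ, hζ⟩ := hLm
  have hmL : NeZero (m : F⟮x⟯) := hζ.neZero'
  have hmF : (m : F) ≠ 0 := fun h =>
    hmL.out (by simpa using congrArg (algebraMap F F⟮x⟯) h)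
  have hsplit : ((X ^ m - C a : F[X]).map (algebraMap F F⟮x⟯)).Splits := by
    simpa using X_pow_sub_C_splits_of_isPrimitiveRoot hζ (α := AdjoinSimple.gen F x)
      (Subtype.ext (by simpa using hx))
  have : IsSplittingField F F⟮x⟯ (X ^ m - C a) := by
    refine IntermediateField.isSplittingField_iff.2 ⟨hsplit, le_antisymm ?_ ?_⟩
    · refine adjoin_simple_le_iff.2 (subset_adjoin F _ ?_)
      simp [mem_rootSet_of_ne (X_pow_sub_C_ne_zero (NeZero.pos m) a), hx]
    · rw [adjoin_le_iff, ← hsplit.image_rootSet F⟮x⟯.val]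
      rintro _ ⟨y, -, rfl⟩
      exact y.2
  exact .of_separable_splitting_field (separable_X_pow_sub_C a hmF ha)

theorem isGalois_of_isPrimitiveRoot_of_finrank_prime [NeZero m]
    (hF : ¬ ∃ ζ : F, IsPrimitiveRoot ζ m) (hL : (finrank F L).Prime)
    (hLm : ∃ ζ : L, IsPrimitiveRoot ζ m) : IsGalois F L := by
  obtain ⟨ζ, hζ⟩ := hLm
  have hgen := adjoin_simple_eq_of_isPrimitiveRoot_of_finrank_prime hF hL hζ
  exact isGalois_of_adjoin_simple_eq_of_pow_eq hgen one_ne_zero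
    (by simpa using congrArg Subtype.val hζ.pow_eq_one) ⟨ζ, hζ⟩

theorem isGalois_of_pow_eq_of_finrank_prime [NeZero m] (hF : ∃ ζ : F, IsPrimitiveRoot ζ m) {a : F}
    (ha : ∀ b : F, b ^ m ≠ a) (hL : (finrank F L).Prime) {x : L}
    (hx : x ^ m = algebraMap F L a) : IsGalois F L := by
  have ha0 : a ≠ 0 := fun h => ha 0 (by simp [h, NeZero.ne m])
  obtain ⟨ζ, hζ⟩ := hF
  have hgen := adjoin_simple_eq_of_pow_eq_of_finrank_prime ha hL hx
  exact isGalois_of_adjoin_simple_eq_of_pow_eq hgen ha0 (congrArg Subtype.val hx)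
    ⟨_, hζ.map_of_injective (algebraMap F _).injective⟩

theorem injective_pow_of_not_exists_isPrimitiveRoot (hℓ : ℓ.Prime)
    (hF : ¬ ∃ ζ : F, IsPrimitiveRoot ζ ℓ) : Function.Injective fun x : F => x ^ ℓ := by
  intro x y (hxy : x ^ ℓ = y ^ ℓ)
  by_contra hne
  have hy : y ≠ 0 := by
    rintro rfl
    exact hne (by simpa [hℓ.ne_zero] using hxy)
  have : Fact ℓ.Prime := ⟨hℓ⟩
  have hord : orderOf (x / y) = ℓ :=
    orderOf_eq_prime (by rw [div_pow, hxy, div_self (pow_ne_zero _ hy)])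
      fun h => hne (eq_of_div_eq_one h)
  exact hF ⟨x / y, hord ▸ .orderOf _⟩

theorem not_exists_isPrimitiveRoot_of_finrank_eq_prime (hℓ : ℓ.Prime)
    (hF : ¬ ∃ ζ : F, IsPrimitiveRoot ζ ℓ) (hL : finrank F L = ℓ) :
    ¬ ∃ ζ : L, IsPrimitiveRoot ζ ℓ := by
  rintro ⟨ζ, hζ⟩
  have hgen := adjoin_simple_eq_of_isPrimitiveRoot_of_finrank_prime hF (hL ▸ hℓ) hζ
  have : FiniteDimensional F L := .of_finrank_pos (hL ▸ hℓ.pos)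
  have hint : IsIntegral F (ζ : E) := (IsIntegral.of_finite F ζ).map L.val
  have hdeg : (minpoly F ζ).natDegree = ℓ := by
    rw [minpoly_eq ζ, ← adjoin.finrank hint, ← hL]
    exact congrArg (fun M : IntermediateField F E => finrank F M) hgen
  have hdvd : minpoly F ζ ∣ cyclotomic ℓ F := minpoly.dvd _ _ <| by
    rw [aeval_def, eval₂_eq_eval_map, map_cyclotomic]
    exact hζ.isRoot_cyclotomic hℓ.pos
  have hle := natDegree_le_of_dvd hdvd (cyclotomic_ne_zero _ _)
  rw [hdeg, natDegree_cyclotomic, Nat.totient_prime hℓ] at hle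
  exact absurd hle (Nat.sub_lt hℓ.pos one_pos).not_ge

theorem finrank_adjoin_simple_of_pow_eq (hℓ : ℓ.Prime) {a : F} (ha : ∀ b : F, b ^ ℓ ≠ a) {x : E}
    (hx : x ^ ℓ = algebraMap F E a) : finrank F F⟮x⟯ = ℓ := by
  have hmin : minpoly F x = X ^ ℓ - C a :=
    (minpoly.eq_of_irreducible_of_monic (X_pow_sub_C_irreducible_of_prime hℓ ha) (by simp [hx])
      (monic_X_pow_sub_C a hℓ.ne_zero)).symm
  rw [adjoin.finrank (minpoly.ne_zero_iff.1 (hmin ▸ X_pow_sub_C_ne_zero hℓ.pos a)), hmin,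
    natDegree_X_pow_sub_C]

theorem not_isGalois_adjoin_simple_of_pow_eq (hℓ : ℓ.Prime) (hF : ¬ ∃ ζ : F, IsPrimitiveRoot ζ ℓ)
    {a : F} (ha : ∀ b : F, b ^ ℓ ≠ a) {x : E} (hx : x ^ ℓ = algebraMap F E a) :
    ¬ IsGalois F F⟮x⟯ := by
  intro hGal
  have hdeg := finrank_adjoin_simple_of_pow_eq hℓ ha hx
  have : FiniteDimensional F F⟮x⟯ := .of_finrank_pos (hdeg ▸ hℓ.pos)
  have hinj := injective_pow_of_not_exists_isPrimitiveRoot hℓ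
    (not_exists_isPrimitiveRoot_of_finrank_eq_prime hℓ hF hdeg)
  have hgen : AdjoinSimple.gen F x ^ ℓ = algebraMap F F⟮x⟯ a := Subtype.ext (by simpa)
  have hfix (σ : Gal(F⟮x⟯/F)) : σ (AdjoinSimple.gen F x) = AdjoinSimple.gen F x :=
    hinj (by simp [← map_pow, hgen])
  have : Subsingleton Gal(F⟮x⟯/F) :=
    ⟨fun σ τ => AlgEquiv.coe_toAlgHom_injective <| adjoin_algHom_ext F fun y hy => by
      obtain rfl : y = x := hy
      exact (hfix σ).trans (hfix τ).symm⟩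
  have hcard := IsGalois.card_aut_eq_finrank F F⟮x⟯
  rw [Nat.card_unique, hdeg] at hcard
  exact hℓ.ne_one hcard.symm

theorem injOn_adjoin_simple_setOf_pow_eq (hℓ : ℓ.Prime) (hF : ¬ ∃ ζ : F, IsPrimitiveRoot ζ ℓ)
    {a : F} (ha : ∀ b : F, b ^ ℓ ≠ a) :
    Set.InjOn (fun x : E => F⟮x⟯) {x | x ^ ℓ = algebraMap F E a} := by
  intro x hx y hy (hxy : F⟮x⟯ = F⟮y⟯)
  have hinj := injective_pow_of_not_exists_isPrimitiveRoot hℓ <|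
    not_exists_isPrimitiveRoot_of_finrank_eq_prime hℓ hF (finrank_adjoin_simple_of_pow_eq hℓ ha hy)
  have hxmem : x ∈ F⟮y⟯ := hxy ▸ mem_adjoin_simple_self F x
  exact congrArg Subtype.val <|
    hinj (a₁ := ⟨x, hxmem⟩) (a₂ := AdjoinSimple.gen F y) (Subtype.ext (hx.trans hy.symm))

theorem ncard_setOf_pow_eq {R : Type*} [CommRing R] [IsDomain R] [NeZero m] {ζ : R}
    (hζ : IsPrimitiveRoot ζ m) {a x : R} (ha : a ≠ 0) (hx : x ^ m = a) :
    {y : R | y ^ m = a}.ncard = m := by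
  classical
  have hset : {y : R | y ^ m = a} = (nthRoots m a).toFinset := by
    ext y
    simp [mem_nthRoots (NeZero.pos m)]
  rw [hset, Set.ncard_coe_finset, Multiset.toFinset_card_of_nodup (hζ.nthRoots_nodup ha),
    hζ.card_nthRoots, if_pos ⟨x, hx⟩]

section Counting

variable [NeZero m] {a : F} {U : IntermediateField F E}

theorem setOf_finrank_eq_prime (hℓ : ℓ.Prime) (hFm : ¬ ∃ ζ : F, IsPrimitiveRoot ζ m)
    (ha : ∀ b : F, b ^ ℓ ≠ a) (hU : finrank F U = ℓ) (hUm : ∃ ζ : U, IsPrimitiveRoot ζ m)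
    (hdich : ∀ L : IntermediateField F E, finrank F L = ℓ →
      (∃ ζ : L, IsPrimitiveRoot ζ m) ∨ ∃ x : L, x ^ ℓ = algebraMap F L a) :
    {L : IntermediateField F E | finrank F L = ℓ} =
      insert U ((fun x : E => F⟮x⟯) '' {x | x ^ ℓ = algebraMap F E a}) := by
  refine Set.Subset.antisymm (fun L (hL : finrank F L = ℓ) => (hdich L hL).imp ?_ ?_) ?_
  · exact fun hLm => eq_of_isPrimitiveRoot_of_finrank_prime hFm (hL ▸ hℓ) (hU ▸ hℓ) hLm hUm
  · rintro ⟨x, hx⟩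
    exact ⟨x, congrArg Subtype.val hx, adjoin_simple_eq_of_pow_eq_of_finrank_prime ha (hL ▸ hℓ) hx⟩
  · rintro _ (rfl | ⟨x, hx, rfl⟩)
    · exact hU
    · exact finrank_adjoin_simple_of_pow_eq hℓ ha hx

theorem setOf_finrank_eq_prime_and_isGalois (hℓ : ℓ.Prime) (hF : ¬ ∃ ζ : F, IsPrimitiveRoot ζ ℓ)
    (hFm : ¬ ∃ ζ : F, IsPrimitiveRoot ζ m)
    (ha : ∀ b : F, b ^ ℓ ≠ a) (hU : finrank F U = ℓ) (hUm : ∃ ζ : U, IsPrimitiveRoot ζ m)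
    (hdich : ∀ L : IntermediateField F E, finrank F L = ℓ →
      (∃ ζ : L, IsPrimitiveRoot ζ m) ∨ ∃ x : L, x ^ ℓ = algebraMap F L a) :
    {L : IntermediateField F E | finrank F L = ℓ ∧ IsGalois F L} = {U} := by
  have hset := setOf_finrank_eq_prime hℓ hFm ha hU hUm hdich
  refine Set.Subset.antisymm ?_ (Set.singleton_subset_iff.2
    ⟨hU, isGalois_of_isPrimitiveRoot_of_finrank_prime hFm (hU ▸ hℓ) hUm⟩)
  rintro L ⟨hL, hGal⟩
  rcases hset.subset hL with rfl | ⟨x, hx, rfl⟩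
  · rfl
  · exact absurd hGal (not_isGalois_adjoin_simple_of_pow_eq hℓ hF ha hx)

theorem ncard_setOf_finrank_eq_prime [IsAlgClosed E] (hℓ : ℓ.Prime) (hℓF : (ℓ : F) ≠ 0)
    (hF : ¬ ∃ ζ : F, IsPrimitiveRoot ζ ℓ) (hFm : ¬ ∃ ζ : F, IsPrimitiveRoot ζ m)
    (ha : ∀ b : F, b ^ ℓ ≠ a) (hU : finrank F U = ℓ) (hUm : ∃ ζ : U, IsPrimitiveRoot ζ m)
    (hdich : ∀ L : IntermediateField F E, finrank F L = ℓ →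
      (∃ ζ : L, IsPrimitiveRoot ζ m) ∨ ∃ x : L, x ^ ℓ = algebraMap F L a) :
    {L : IntermediateField F E | finrank F L = ℓ}.ncard = ℓ + 1 := by
  have : NeZero ℓ := ⟨hℓ.ne_zero⟩
  have : NeZero (ℓ : E) := ⟨by simpa using (map_ne_zero (algebraMap F E)).2 hℓF⟩
  obtain ⟨ζ, hζ⟩ := HasEnoughRootsOfUnity.exists_primitiveRoot E ℓ
  obtain ⟨x, hx⟩ := IsAlgClosed.exists_pow_nat_eq (algebraMap F E a) hℓ.pos
  have ha0 : a ≠ 0 := fun h => ha 0 (by simp [h, hℓ.ne_zero])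
  have hcard : {y : E | y ^ ℓ = algebraMap F E a}.ncard = ℓ :=
    ncard_setOf_pow_eq hζ (by simpa using ha0) hx
  have hU_notMem : U ∉ (fun x : E => F⟮x⟯) '' {x | x ^ ℓ = algebraMap F E a} := by
    rintro ⟨y, hy, rfl⟩
    exact not_isGalois_adjoin_simple_of_pow_eq hℓ hF ha hy
      (isGalois_of_isPrimitiveRoot_of_finrank_prime hFm (hU ▸ hℓ) hUm)
  have hfin : {y : E | y ^ ℓ = algebraMap F E a}.Finite :=
    Set.finite_of_ncard_ne_zero (by rw [hcard]; exact hℓ.ne_zero)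
  rw [setOf_finrank_eq_prime hℓ hFm ha hU hUm hdich,
    Set.ncard_insert_of_notMem hU_notMem (hfin.image _),
    (injOn_adjoin_simple_setOf_pow_eq hℓ hF ha).ncard_image, hcard]

end Counting

end PrimeDegree

theorem stmt19_general {F E : Type*} [NontriviallyNormedField F] [IsUltrametricDist F]
    [ProperSpace F] [Field E] [Algebra F E] [IsAlgClosed E] {ℓ : ℕ} (hℓ : ℓ.Prime)
    (hℓF : ‖(ℓ : F)‖ = 1) :
    ((∃ ζ : F, IsPrimitiveRoot ζ ℓ) →
      ∀ L : IntermediateField F E, finrank F L = ℓ → IsGalois F L) ∧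
    ((¬ ∃ ζ : F, IsPrimitiveRoot ζ ℓ) →
      Nat.card {L : IntermediateField F E // finrank F L = ℓ} = ℓ + 1 ∧
      Nat.card {L : IntermediateField F E // finrank F L = ℓ ∧ IsGalois F L} = 1) := by
  have : NeZero ℓ := ⟨hℓ.ne_zero⟩
  have : NeZero (Nat.card 𝓀[F] ^ ℓ - 1) :=
    ⟨(Nat.sub_pos_of_lt (Nat.one_lt_pow hℓ.ne_zero Finite.one_lt_card)).ne'⟩
  have hFm := mt (exists_isPrimitiveRoot_fractionRing_iff (K := F) (NeZero.pos _)).1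
    (not_exists_isPrimitiveRoot_card_residueField_pow_sub_one (R := 𝒪[F]) hℓ.one_lt)
  refine ⟨fun hF L hL => ?_, fun hF => ?_⟩
  · obtain hLm | ⟨ϖ, x, hϖ, hx⟩ := exists_isPrimitiveRoot_or_exists_pow_eq_irreducible hℓ hℓF hL
    · exact isGalois_of_isPrimitiveRoot_of_finrank_prime hFm (hL ▸ hℓ) hLm
    · exact isGalois_of_pow_eq_of_finrank_prime hF
        (pow_ne_algebraMap_irreducible hϖ hℓ.one_lt) (hL ▸ hℓ) hx
  · obtain ⟨ϖ, hϖ⟩ := IsDiscreteValuationRing.exists_irreducible 𝒪[F]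
    obtain ⟨U, hU, hUm⟩ := exists_finrank_eq_and_isPrimitiveRoot (K := F) (E := E) hℓ.ne_zero
    have hℓF0 : (ℓ : F) ≠ 0 := norm_ne_zero_iff.1 (hℓF ▸ one_ne_zero)
    have hϖℓ := pow_ne_algebraMap_irreducible (K := F) hϖ hℓ.one_lt
    have hdich (L : IntermediateField F E) (hL : finrank F L = ℓ) :=
      exists_isPrimitiveRoot_or_exists_pow_eq_of_irreducible hℓ hℓF hF hϖ hL
    refine ⟨ncard_setOf_finrank_eq_prime hℓ hℓF0 hF hFm hϖℓ hU hUm hdich, ?_⟩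
    exact (congrArg Set.ncard
      (setOf_finrank_eq_prime_and_isGalois hℓ hF hFm hϖℓ hU hUm hdich)).trans
        (Set.ncard_singleton U)

theorem stmt19 (p : ℕ) [Fact p.Prime] (hp : p ≠ 3)
    (F : Type*) [Field F] [Algebra ℚ_[p] F] [FiniteDimensional ℚ_[p] F] :
    ((∃ ζ : F, IsPrimitiveRoot ζ 3) →
      ∀ L : IntermediateField F (AlgebraicClosure F),
        Module.finrank F L = 3 → IsGalois F L) ∧
    ((¬ ∃ ζ : F, IsPrimitiveRoot ζ 3) →
      Nat.card {L : IntermediateField F (AlgebraicClosure F) //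
          Module.finrank F L = 3} = 4 ∧
      Nat.card {L : IntermediateField F (AlgebraicClosure F) //
          Module.finrank F L = 3 ∧ IsGalois F L} = 1) := by
  let := spectralNorm.nontriviallyNormedField ℚ_[p] F
  let := spectralNorm.normedAlgebra ℚ_[p] F
  have : IsUltrametricDist F := IsUltrametricDist.isUltrametricDist_of_isNonarchimedean_norm
    (isNonarchimedean_spectralNorm (K := ℚ_[p]) (L := F))
  have : ProperSpace F := FiniteDimensional.proper ℚ_[p] F
  have hnorm : ‖((3 : ℕ) : F)‖ = 1 := by
    rw [← map_natCast (algebraMap ℚ_[p] F), norm_algebraMap', Padic.norm_natCast_eq_one_iff]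
    exact (Nat.coprime_primes Fact.out Nat.prime_three).2 hp
  exact stmt19_general Nat.prime_three hnorm
end
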